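/- arXiv:0903.0444 — 4 statements merged into one kernel-verified Lean document; each statement's English description precedes it below -/
import Mathlib

section
/- Let 𝒜 = {A₁,…,Aₙ} be a finite family of diagonalizable real 2×2 Vandergraft matrices with nonnegative determinants. If every four matrices of 𝒜 have a common invariant proper cone, then there exists a proper cone invariant under every matrix of 𝒜. Moreover, if at most one pair of matrices in 𝒜 is simultaneously diagonalizable (i.e., diagonalizable by a common invertible matrix), then the same conclusion already follows if every three matrices of 𝒜 have a common invariant proper cone. -/
/-- A set `K ⊆ ℝ^m` is a proper cone: closed under nonnegative scaling,
convex (closed under addition), topologically closed, pointed and solid. -/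
def IsProperCone {m : ℕ} (K : Set (Fin m → ℝ)) : Prop :=
  (∀ a : ℝ, 0 ≤ a → ∀ x ∈ K, a • x ∈ K) ∧
  (∀ x ∈ K, ∀ y ∈ K, x + y ∈ K) ∧
  IsClosed K ∧ K ∩ (-K) = {0} ∧ (interior K).Nonempty

/-- `K` is invariant under the matrix `A`. -/
def InvariantUnder {m : ℕ} (A : Matrix (Fin m) (Fin m) ℝ) (K : Set (Fin m → ℝ)) : Prop :=
  ∀ x ∈ K, A.mulVec x ∈ K

/-- `A` is a Vandergraft matrix: `(trace A)² ≥ 4 det A` and `trace A ≥ 0`. -/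
def IsVandergraft (A : Matrix (Fin 2) (Fin 2) ℝ) : Prop :=
  A.trace ^ 2 ≥ 4 * A.det ∧ 0 ≤ A.trace

/-- `A` is diagonalizable by a real similarity. -/
def IsDiagonalizable (A : Matrix (Fin 2) (Fin 2) ℝ) : Prop :=
  ∃ P : Matrix (Fin 2) (Fin 2) ℝ, IsUnit P.det ∧ (P⁻¹ * A * P).IsDiag

/-- `A` and `B` are simultaneously diagonalizable (by a common real
invertible matrix). -/
def SimDiag (A B : Matrix (Fin 2) (Fin 2) ℝ) : Prop :=
  ∃ P : Matrix (Fin 2) (Fin 2) ℝ, IsUnit P.det ∧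
    (P⁻¹ * A * P).IsDiag ∧ (P⁻¹ * B * P).IsDiag

/-- Evaluation of the linear functional with coefficients `F` at `x`. -/
def fev (F x : Fin 2 → ℝ) : ℝ := F 0 * x 0 + F 1 * x 1

lemma fev_add (F x y : Fin 2 → ℝ) : fev F (x + y) = fev F x + fev F y := by
  simp [fev]; ring

lemma fev_smul (F x : Fin 2 → ℝ) (c : ℝ) : fev F (c • x) = c * fev F x := by
  simp [fev]; ring

lemma smul_fev (F x : Fin 2 → ℝ) (c : ℝ) : fev (c • F) x = c * fev F x := by
  simp [fev]; ring

lemma fev_zero (F : Fin 2 → ℝ) : fev F 0 = 0 := by simp [fev]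

lemma fev_neg (F x : Fin 2 → ℝ) : fev F (-x) = - fev F x := by simp [fev]; ring

lemma fev_continuous (F : Fin 2 → ℝ) : Continuous (fev F) := by
  unfold fev; fun_prop

lemma fev_sum {ι : Type*} (s : Finset ι) (F : Fin 2 → ℝ) (x : ι → Fin 2 → ℝ) :
    fev F (∑ i ∈ s, x i) = ∑ i ∈ s, fev F (x i) := by
  simp [fev, Finset.mul_sum, Finset.sum_add_distrib]

/-- transfer along a common kernel -/
lemma fev_transfer {f g p q : Fin 2 → ℝ} (hp : p ≠ 0) (hg : g ≠ 0)
    (h1 : fev f p = 0) (h2 : fev g p = 0) (h3 : fev g q = 0) : fev f q = 0 := by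
  unfold fev at *
  have hD : f 0 * g 1 - f 1 * g 0 = 0 := by
    by_contra hne
    apply hp
    have e0 : (f 0 * g 1 - f 1 * g 0) * p 0 = 0 := by linear_combination g 1 * h1 - f 1 * h2
    have e1 : (f 0 * g 1 - f 1 * g 0) * p 1 = 0 := by linear_combination f 0 * h2 - g 0 * h1
    ext i; fin_cases i
    · simpa [hne] using e0
    · simpa [hne] using e1
  by_contra hne
  apply hg
  have e0 : g 0 * (f 0 * q 0 + f 1 * q 1) = 0 := by
    linear_combination f 0 * h3 - q 1 * hD
  have e1 : g 1 * (f 0 * q 0 + f 1 * q 1) = 0 := by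
    linear_combination f 1 * h3 + q 0 * hD
  ext i; fin_cases i
  · simpa [hne] using e0
  · simpa [hne] using e1

/-- Structure of a nonscalar matrix. -/
def HasData (A : Matrix (Fin 2) (Fin 2) ℝ) (p f : Fin 2 → ℝ) (b : ℝ) : Prop :=
  0 ≤ b ∧ 0 < fev f p ∧ ∀ x, A.mulVec x = b • x + fev f x • p

lemma data_exists (A : Matrix (Fin 2) (Fin 2) ℝ) (hd : IsDiagonalizable A)
    (hV : IsVandergraft A) (hdet : 0 ≤ A.det) :
    (∃ c : ℝ, 0 ≤ c ∧ ∀ x, A.mulVec x = c • x) ∨ ∃ p f b, HasData A p f b := by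
  obtain ⟨P, hP, hD⟩ := hd
  obtain ⟨-, htr⟩ := hV
  set D := P⁻¹ * A * P with hDdef
  have hPP : P * P⁻¹ = 1 := Matrix.mul_nonsing_inv P hP
  have hA : A = P * D * P⁻¹ := by
    rw [hDdef]
    simp only [Matrix.mul_assoc, hPP, Matrix.mul_one]
    rw [← Matrix.mul_assoc, hPP, Matrix.one_mul]
  have hPi : P⁻¹ * P = 1 := Matrix.nonsing_inv_mul P hP
  set Q := P⁻¹ with hQ
  clear_value Q D
  have h01 : D 0 1 = 0 := hD (by decide)
  have h10 : D 1 0 = 0 := hD (by decide)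
  have e00 := congrFun (congrFun hPP 0) 0
  have e01 := congrFun (congrFun hPP 0) 1
  have e10 := congrFun (congrFun hPP 1) 0
  have e11 := congrFun (congrFun hPP 1) 1
  have g00 := congrFun (congrFun hPi 0) 0
  have g11 := congrFun (congrFun hPi 1) 1
  simp [Matrix.mul_apply, Fin.sum_univ_two] at e00 e01 e10 e11 g00 g11
  have ht : A.trace = D 0 0 + D 1 1 := by
    rw [hA, Matrix.trace_mul_comm, ← Matrix.mul_assoc, hPi, Matrix.one_mul, Matrix.trace_fin_two]
  have hde : A.det = D 0 0 * D 1 1 := by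
    have : Q.det * P.det = 1 := by rw [← Matrix.det_mul, hPi, Matrix.det_one]
    rw [hA, Matrix.det_mul, Matrix.det_mul, Matrix.det_fin_two D, h01, h10]
    linear_combination (D 0 0 * D 1 1) * this
  rw [ht] at htr
  rw [hde] at hdet
  have hd0 : 0 ≤ D 0 0 := by
    by_contra h; push Not at h
    nlinarith
  have hd1 : 0 ≤ D 1 1 := by
    by_contra h; push Not at h
    nlinarith
  have hAx : ∀ x, A.mulVec x =
      ![(P 0 0 * D 0 0 * Q 0 0 + P 0 1 * D 1 1 * Q 1 0) * x 0 +
        (P 0 0 * D 0 0 * Q 0 1 + P 0 1 * D 1 1 * Q 1 1) * x 1,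
        (P 1 0 * D 0 0 * Q 0 0 + P 1 1 * D 1 1 * Q 1 0) * x 0 +
        (P 1 0 * D 0 0 * Q 0 1 + P 1 1 * D 1 1 * Q 1 1) * x 1] := by
    intro x
    rw [hA]
    ext i; fin_cases i <;>
      simp [Matrix.mulVec, dotProduct, Matrix.mul_apply, Fin.sum_univ_two, h01, h10]
  rcases lt_trichotomy (D 0 0) (D 1 1) with h | h | h
  · right
    refine ⟨![P 0 1, P 1 1], ![(D 1 1 - D 0 0) * Q 1 0, (D 1 1 - D 0 0) * Q 1 1], D 0 0,
      hd0, ?_, ?_⟩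
    · have : fev ![(D 1 1 - D 0 0) * Q 1 0, (D 1 1 - D 0 0) * Q 1 1] ![P 0 1, P 1 1]
          = D 1 1 - D 0 0 := by
        simp [fev]; linear_combination (D 1 1 - D 0 0) * g11
      rw [this]; linarith
    · intro x; rw [hAx]
      ext i; fin_cases i
      · simp [fev]; linear_combination (D 0 0) * x 0 * e00 + D 0 0 * x 1 * e01
      · simp [fev]; linear_combination (D 0 0) * x 0 * e10 + D 0 0 * x 1 * e11
  · left
    refine ⟨D 0 0, hd0, fun x => ?_⟩
    rw [hAx, ← h]
    ext i; fin_cases i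
    · simp; linear_combination (D 0 0) * x 0 * e00 + D 0 0 * x 1 * e01
    · simp; linear_combination (D 0 0) * x 0 * e10 + D 0 0 * x 1 * e11
  · right
    refine ⟨![P 0 0, P 1 0], ![(D 0 0 - D 1 1) * Q 0 0, (D 0 0 - D 1 1) * Q 0 1], D 1 1,
      hd1, ?_, ?_⟩
    · have : fev ![(D 0 0 - D 1 1) * Q 0 0, (D 0 0 - D 1 1) * Q 0 1] ![P 0 0, P 1 0]
          = D 0 0 - D 1 1 := by
        simp [fev]; linear_combination (D 0 0 - D 1 1) * g00
      rw [this]; linarith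
    · intro x; rw [hAx]
      ext i; fin_cases i
      · simp [fev]; linear_combination (D 1 1) * x 0 * e00 + D 1 1 * x 1 * e01
      · simp [fev]; linear_combination (D 1 1) * x 0 * e10 + D 1 1 * x 1 * e11

lemma HasData.p_ne {A p f b} (h : HasData A p f b) : p ≠ 0 := by
  rintro rfl; have := h.2.1; simp [fev_zero] at this

lemma HasData.f_ne {A p f b} (h : HasData A p f b) : f ≠ 0 := by
  rintro rfl; have := h.2.1; simp [fev] at this

lemma simDiag_of_null {A B : Matrix (Fin 2) (Fin 2) ℝ} {p f b q g c}
    (hA : HasData A p f b) (hB : HasData B q g c) (h1 : fev f q = 0) (h2 : fev g p = 0) :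
    SimDiag A B := by
  have hdet : p 0 * q 1 - q 0 * p 1 ≠ 0 := by
    intro h0
    apply hB.p_ne
    have hp := hA.2.1
    have e0 : fev f p * q 0 = 0 := by
      unfold fev at *; linear_combination p 0 * h1 - f 1 * h0
    have e1 : fev f p * q 1 = 0 := by
      unfold fev at *; linear_combination p 1 * h1 + f 0 * h0
    ext i; fin_cases i
    · simpa [hp.ne'] using e0
    · simpa [hp.ne'] using e1
  have hu : IsUnit (!![p 0, q 0; p 1, q 1] : Matrix (Fin 2) (Fin 2) ℝ).det := by
    rw [Matrix.det_fin_two_of]; exact isUnit_iff_ne_zero.mpr hdet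
  have key : ∀ (C : Matrix (Fin 2) (Fin 2) ℝ) (s t : ℝ), C.mulVec p = s • p →
      C.mulVec q = t • q →
      ((!![p 0, q 0; p 1, q 1])⁻¹ * C * !![p 0, q 0; p 1, q 1]).IsDiag := by
    intro C s t hs ht
    have : C * !![p 0, q 0; p 1, q 1] = !![p 0, q 0; p 1, q 1] * Matrix.diagonal ![s, t] := by
      have s0 := congrFun hs 0
      have s1 := congrFun hs 1
      have t0 := congrFun ht 0
      have t1 := congrFun ht 1
      simp [Matrix.mulVec, dotProduct, Fin.sum_univ_two] at s0 s1 t0 t1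
      ext i j; fin_cases i <;> fin_cases j <;>
        simp [Matrix.mul_apply, Fin.sum_univ_two] <;> linarith
    rw [Matrix.mul_assoc, this, ← Matrix.mul_assoc, Matrix.nonsing_inv_mul _ hu, Matrix.one_mul]
    exact Matrix.isDiag_diagonal _
  refine ⟨_, hu, key A (b + fev f p) b ?_ ?_, key B c (c + fev g q) ?_ ?_⟩
  · rw [hA.2.2, add_smul]
  · rw [hA.2.2, h1]; simp
  · rw [hB.2.2, h2]; simp
  · rw [hB.2.2, add_smul]

/-- limit argument: the dominant eigenvector lies in the cone up to sign. -/
lemma limit_mem {A : Matrix (Fin 2) (Fin 2) ℝ} {p f b} (hA : HasData A p f b)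
    {K : Set (Fin 2 → ℝ)} (hK : IsProperCone K) (hI : InvariantUnder A K)
    {x : Fin 2 → ℝ} (hx : x ∈ K) : fev f x • p ∈ K := by
  obtain ⟨hs, -, hcl, -, -⟩ := hK
  obtain ⟨hb, hfp, hA⟩ := hA
  set a := b + fev f p with ha
  have hapos : 0 < a := by linarith
  set y := fev f p • x - fev f x • p with hy
  have hfy : fev f y = 0 := by
    rw [hy, sub_eq_add_neg, fev_add, fev_neg, fev_smul, fev_smul]; ring
  have hmem : ∀ n : ℕ, fev f x • p + (b / a) ^ n • y ∈ K := by
    intro n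
    induction n with
    | zero =>
      have : fev f x • p + (b / a) ^ 0 • y = fev f p • x := by
        rw [hy]; simp
      rw [this]; exact hs _ hfp.le _ hx
    | succ n ih =>
      have h2 := hs a⁻¹ (inv_nonneg.mpr hapos.le) _ (hI _ ih)
      have : fev f x • p + (b / a) ^ (n + 1) • y =
          a⁻¹ • A.mulVec (fev f x • p + (b / a) ^ n • y) := by
        rw [hA, fev_add, fev_smul, fev_smul, hfy]
        ext i
        simp only [Pi.add_apply, Pi.smul_apply, smul_eq_mul]
        rw [pow_succ]
        field_simp
        rw [ha]; ring
      rw [this]; exact h2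
  have hlim : Filter.Tendsto (fun n : ℕ => fev f x • p + (b / a) ^ n • y) Filter.atTop
      (nhds (fev f x • p + (0 : ℝ) • y)) := by
    apply Filter.Tendsto.add tendsto_const_nhds
    apply Filter.Tendsto.smul_const
    apply tendsto_pow_atTop_nhds_zero_of_lt_one
    · positivity
    · rw [div_lt_one hapos]; linarith
  have := hcl.mem_of_tendsto hlim (Filter.Eventually.of_forall hmem)
  simpa using this

lemma sign_exists {A : Matrix (Fin 2) (Fin 2) ℝ} {p f b} (hA : HasData A p f b)
    {K : Set (Fin 2 → ℝ)} (hK : IsProperCone K) (hI : InvariantUnder A K) :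
    ∃ e : ℝ, (e = 1 ∨ e = -1) ∧ e • p ∈ K ∧ ∀ x ∈ K, 0 ≤ e * fev f x := by
  have hlm := fun x (hx : x ∈ K) => limit_mem hA hK hI hx
  have hpne := hA.p_ne
  obtain ⟨hs, hadd, hcl, hpt, w, hw⟩ := hK
  obtain ⟨hb, hfp, -⟩ := hA
  have hpos : ∀ x ∈ K, 0 < fev f x → p ∈ K := by
    intro x hx h
    have := hs (fev f x)⁻¹ (by positivity) _ (hlm x hx)
    rwa [smul_smul, inv_mul_cancel₀ h.ne', one_smul] at this
  have hneg : ∀ x ∈ K, fev f x < 0 → -p ∈ K := by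
    intro x hx h
    have := hs (-(fev f x)⁻¹) (by have := inv_neg''.mpr h; linarith) _ (hlm x hx)
    rwa [smul_smul, neg_mul, inv_mul_cancel₀ h.ne, neg_smul, one_smul] at this
  have hnot : p ∈ K → -p ∈ K → False := by
    intro h1 h2
    have : p ∈ K ∩ (-K) := ⟨h1, by simpa using h2⟩
    rw [hpt] at this
    exact hpne this
  have hex : ∃ x ∈ K, fev f x ≠ 0 := by
    by_cases h : fev f w = 0
    · have hc : Filter.Tendsto (fun t : ℝ => w + t • p) (nhdsWithin 0 (Set.Ioi 0)) (nhds w) := by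
        have : Continuous (fun t : ℝ => w + t • p) := by fun_prop
        have := this.tendsto 0
        simp only [zero_smul, add_zero] at this
        exact this.mono_left nhdsWithin_le_nhds
      have h1 := hc.eventually (mem_interior_iff_mem_nhds.mp hw)
      have h2 : ∀ᶠ t : ℝ in nhdsWithin 0 (Set.Ioi 0), 0 < t := self_mem_nhdsWithin
      obtain ⟨t, ht, ht0⟩ := (h1.and h2).exists
      refine ⟨_, ht, ?_⟩
      rw [fev_add, fev_smul, h]
      have : 0 < t * fev f p := by positivity
      linarith
    · exact ⟨w, interior_subset hw, h⟩
  obtain ⟨x, hx, hne⟩ := hex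
  rcases lt_or_gt_of_ne hne with h | h
  · refine ⟨-1, Or.inr rfl, by simpa using hneg x hx h, fun z hz => ?_⟩
    by_contra hc
    exact hnot (hpos z hz (by linarith)) (hneg x hx h)
  · refine ⟨1, Or.inl rfl, by simpa using hpos x hx h, fun z hz => ?_⟩
    by_contra hc
    exact hnot (hpos x hx h) (hneg z hz (by linarith))

/-- The functional making the cone pointed. -/
lemma exists_g {ι : Type*} [Fintype ι] [Nonempty ι] (p f : ι → Fin 2 → ℝ)
    (hpos : ∀ i, 0 < fev (f i) (p i)) (hnn : ∀ i j, 0 ≤ fev (f i) (p j)) :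
    ∃ g : Fin 2 → ℝ, ∃ r : ι, (∀ j, 0 ≤ fev g (p j)) ∧ (∃ j, 0 < fev g (p j)) ∧
      f r 0 * g 1 - f r 1 * g 0 ≠ 0 := by
  obtain ⟨r⟩ := (inferInstance : Nonempty ι)
  by_cases h : ∃ i, f r 0 * f i 1 - f r 1 * f i 0 ≠ 0
  · obtain ⟨i, hi⟩ := h
    exact ⟨f i, r, hnn i, ⟨i, hpos i⟩, hi⟩
  · push Not at h
    have hrp : ∀ j, 0 < fev (f r) (p j) := by
      intro j
      rcases (hnn r j).lt_or_eq with h' | h'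
      · exact h'
      exfalso
      have hfr : f r ≠ 0 := by
        intro h0; have := hpos r; simp [h0, fev] at this
      have hj := hpos j
      have hh := h j
      apply hfr
      have e0 : f r 0 * fev (f j) (p j) = 0 := by
        unfold fev at *; linear_combination p j 1 * hh - f j 0 * h'
      have e1 : f r 1 * fev (f j) (p j) = 0 := by
        unfold fev at *; linear_combination - p j 0 * hh - f j 1 * h'
      ext i; fin_cases i
      · simpa [hj.ne'] using e0
      · simpa [hj.ne'] using e1
    set h0 : Fin 2 → ℝ := ![-(f r 1), f r 0] with hh0
    set N : ℝ := 1 + ∑ j, |fev h0 (p j)| / fev (f r) (p j) with hN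
    have hg : ∀ j, 0 < fev (N • f r + h0) (p j) := by
      intro j
      have e : fev (N • f r + h0) (p j) = N * fev (f r) (p j) + fev h0 (p j) := by
        simp [fev]; ring
      have h1 : |fev h0 (p j)| / fev (f r) (p j) ≤
          ∑ j, |fev h0 (p j)| / fev (f r) (p j) :=
        Finset.single_le_sum (f := fun j => |fev h0 (p j)| / fev (f r) (p j))
          (fun i _ => div_nonneg (abs_nonneg _) (hrp i).le) (Finset.mem_univ j)
      have h2 : |fev h0 (p j)| / fev (f r) (p j) < N := by rw [hN]; linarith
      rw [div_lt_iff₀ (hrp j)] at h2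
      rw [e]
      have := neg_abs_le (fev h0 (p j))
      linarith
    refine ⟨N • f r + h0, r, fun j => (hg j).le, ⟨r, hg r⟩, ?_⟩
    have hfr := hpos r
    simp [hh0]
    intro hz
    have hz2 : f r 0 * f r 0 + f r 1 * f r 1 = 0 := by linarith
    have z0 : f r 0 = 0 := by nlinarith [mul_self_nonneg (f r 0), mul_self_nonneg (f r 1)]
    have z1 : f r 1 = 0 := by nlinarith [mul_self_nonneg (f r 0), mul_self_nonneg (f r 1)]
    simp [fev, z0, z1] at hfr

lemma cone_aux {κ : Type*} [Finite κ] (F : κ → Fin 2 → ℝ) (w : Fin 2 → ℝ)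
    (hw : ∀ i, 0 < fev (F i) w) (r s : κ) (hrs : F r 0 * F s 1 - F r 1 * F s 0 ≠ 0) :
    IsProperCone {x | ∀ i, 0 ≤ fev (F i) x} := by
  refine ⟨?_, ?_, ?_, ?_, ?_⟩
  · intro a ha x hx i
    rw [fev_smul]; exact mul_nonneg ha (hx i)
  · intro x hx y hy i
    rw [fev_add]; exact add_nonneg (hx i) (hy i)
  · rw [Set.setOf_forall]
    exact isClosed_iInter fun i => isClosed_le continuous_const (fev_continuous _)
  · ext x
    simp only [Set.mem_inter_iff, Set.mem_setOf_eq, Set.mem_neg, Set.mem_singleton_iff, fev_neg]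
    constructor
    · rintro ⟨h1, h2⟩
      have er : fev (F r) x = 0 := by linarith [h1 r, h2 r]
      have es : fev (F s) x = 0 := by linarith [h1 s, h2 s]
      unfold fev at er es
      have e0 : (F r 0 * F s 1 - F r 1 * F s 0) * x 0 = 0 := by
        linear_combination F s 1 * er - F r 1 * es
      have e1 : (F r 0 * F s 1 - F r 1 * F s 0) * x 1 = 0 := by
        linear_combination F r 0 * es - F s 0 * er
      ext i; fin_cases i
      · simpa [hrs] using e0
      · simpa [hrs] using e1
    · rintro rfl; simp [fev_zero]
  · refine ⟨w, mem_interior.mpr ⟨{x | ∀ i, 0 < fev (F i) x}, fun x hx i => (hx i).le, ?_, hw⟩⟩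
    rw [Set.setOf_forall]
    exact isOpen_iInter_of_finite fun i => isOpen_lt continuous_const (fev_continuous _)

lemma cone_exists {ι : Type*} [Fintype ι] (p f : ι → Fin 2 → ℝ)
    (hpos : ∀ i, 0 < fev (f i) (p i)) (hnn : ∀ i j, 0 ≤ fev (f i) (p j)) :
    ∃ K : Set (Fin 2 → ℝ), IsProperCone K ∧ (∀ j, p j ∈ K) ∧ ∀ j, ∀ x ∈ K, 0 ≤ fev (f j) x := by
  rcases isEmpty_or_nonempty ι with he | hne
  · refine ⟨_, cone_aux (κ := Fin 2) ![![1, 0], ![0, 1]] ![1, 1] ?_ 0 1 ?_,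
      fun j => he.elim j, fun j => he.elim j⟩
    · intro i; fin_cases i <;> simp [fev]
    · simp
  · obtain ⟨g, r, hg, ⟨j0, hj0⟩, hgr⟩ := exists_g p f hpos hnn
    refine ⟨_, cone_aux (κ := Option ι) (fun o => o.elim g f) (∑ j, p j) ?_ (some r) none hgr,
      ?_, ?_⟩
    · rintro (_ | i)
      · rw [fev_sum]
        exact Finset.sum_pos' (fun j _ => hg j) ⟨j0, Finset.mem_univ _, hj0⟩
      · rw [fev_sum]
        exact Finset.sum_pos' (fun j _ => hnn i j) ⟨i, Finset.mem_univ _, hpos i⟩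
    · rintro j (_ | i)
      · exact hg j
      · exact hnn i j
    · intro j x hx
      exact hx (some j)

/-- `e` is a sign vector compatible with `M` at the pair `(i, j)`. -/
def Compat {ι : Type*} (M : ι → ι → ℝ) (e : ι → ℝ) (i j : ι) : Prop :=
  0 ≤ e i * e j * M i j ∧ 0 ≤ e i * e j * M j i

def IsSign {ι : Type*} (e : ι → ℝ) : Prop := ∀ i, e i = 1 ∨ e i = -1

def NonAdj {ι : Type*} (M : ι → ι → ℝ) (i j : ι) : Prop := M i j = 0 ∧ M j i = 0

open Classical in
noncomputable def esgn {ι : Type*} (M : ι → ι → ℝ) (i j : ι) : ℝ :=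
  if 0 ≤ M i j ∧ 0 ≤ M j i then 1 else -1

lemma esgn_sign {ι : Type*} (M : ι → ι → ℝ) (i j : ι) : esgn M i j = 1 ∨ esgn M i j = -1 := by
  unfold esgn; split_ifs <;> simp

lemma esgn_eq {ι : Type*} {M : ι → ι → ℝ} {e : ι → ℝ} (he : IsSign e) {i j : ι}
    (hc : Compat M e i j) (hn : ¬ NonAdj M i j) : esgn M i j = e i * e j := by
  have h2 : e i * e j = 1 ∨ e i * e j = -1 := by
    rcases he i with h | h <;> rcases he j with h' | h' <;> simp [h, h']
  obtain ⟨c1, c2⟩ := hc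
  rcases h2 with h | h
  · rw [h] at c1 c2 ⊢
    simp at c1 c2
    simp [esgn, c1, c2]
  · rw [h] at c1 c2 ⊢
    simp at c1 c2
    unfold esgn
    rw [if_neg]
    rintro ⟨d1, d2⟩
    exact hn ⟨le_antisymm c1 d1, le_antisymm c2 d2⟩

lemma compat_of_eq {ι : Type*} {M : ι → ι → ℝ} {e d : ι → ℝ} {i j : ι}
    (hc : Compat M e i j) (h : d i * d j = e i * e j) : Compat M d i j := by
  unfold Compat at *; rw [h]; exact hc

lemma compat_of_nonAdj {ι : Type*} {M : ι → ι → ℝ} {d : ι → ℝ} {i j : ι}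
    (h : NonAdj M i j) : Compat M d i j := by
  unfold Compat; simp [h.1, h.2]

lemma compat_symm {ι : Type*} {M : ι → ι → ℝ} {d : ι → ℝ} {i j : ι}
    (h : Compat M d i j) : Compat M d j i := by
  unfold Compat at *; rw [mul_comm (d j)]; exact ⟨h.2, h.1⟩

lemma NonAdj.symm {ι : Type*} {M : ι → ι → ℝ} {i j : ι} (h : NonAdj M i j) : NonAdj M j i :=
  ⟨h.2, h.1⟩

lemma sq_sign {ι : Type*} {e : ι → ℝ} (he : IsSign e) (i : ι) : e i * e i = 1 := by
  rcases he i with h | h <;> simp [h]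

/-- Triples: if `r` is adjacent to everything, three suffice. -/
lemma star_case {ι : Type*} (M : ι → ι → ℝ)
    (h3 : ∀ i j k, ∃ e : ι → ℝ, IsSign e ∧ Compat M e i j ∧ Compat M e i k ∧ Compat M e j k)
    (r : ι) (hr : ∀ i, ¬ NonAdj M r i) : ∃ d, IsSign d ∧ ∀ i j, Compat M d i j := by
  refine ⟨fun i => esgn M r i, fun i => esgn_sign _ _ _, fun i j => ?_⟩
  obtain ⟨e, he, c1, c2, c3⟩ := h3 r i j
  refine compat_of_eq c3 ?_
  simp only [esgn_eq he c1 (hr i), esgn_eq he c2 (hr j)]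
  linear_combination (e i * e j) * sq_sign he r

open Classical in
lemma four_case {ι : Type*} (M : ι → ι → ℝ) (hM : ∀ i, 0 < M i i)
    (hN : ∀ a b c d, NonAdj M a b → NonAdj M b c → NonAdj M c d → NonAdj M a d)
    (h4 : ∀ i j k l, ∃ e : ι → ℝ, IsSign e ∧ Compat M e i j ∧ Compat M e i k ∧ Compat M e i l ∧
      Compat M e j k ∧ Compat M e j l ∧ Compat M e k l) :
    ∃ d, IsSign d ∧ ∀ i j, Compat M d i j := by
  have h3 : ∀ i j k, ∃ e : ι → ℝ,
      IsSign e ∧ Compat M e i j ∧ Compat M e i k ∧ Compat M e j k := by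
    intro i j k
    obtain ⟨e, he, c1, c2, -, c3, -, -⟩ := h4 i j k k
    exact ⟨e, he, c1, c2, c3⟩
  rcases isEmpty_or_nonempty ι with hemp | ⟨⟨r⟩⟩
  · exact ⟨fun _ => 1, fun _ => Or.inl rfl, fun i => hemp.elim i⟩
  by_cases hr : ∀ i, ¬ NonAdj M r i
  · exact star_case M h3 r hr
  push Not at hr
  obtain ⟨r', hrr'⟩ := hr
  by_cases ht : ∃ t, ¬ NonAdj M r t ∧ ¬ NonAdj M r' t
  · obtain ⟨t, hrt, hr't⟩ := ht
    have htj : ∀ j, NonAdj M r j → ¬ NonAdj M t j := by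
      intro j hj h
      exact hr't (hN _ _ _ _ h hj.symm hrr').symm
    have mixed : ∀ i j, ¬ NonAdj M r i → NonAdj M r j → ∃ e : ι → ℝ, Compat M e i j ∧
        esgn M r i * (esgn M r t * esgn M t j) = e i * e j := by
      intro i j hi hj
      obtain ⟨e, he, c1, c2, c3, c4, c5, c6⟩ := h4 r i j t
      refine ⟨e, c4, ?_⟩
      rw [esgn_eq he c1 hi, esgn_eq he c3 hrt, esgn_eq he (compat_symm c6) (htj j hj)]
      linear_combination (e i * e j * (e t * e t)) * sq_sign he r + (e i * e j) * sq_sign he t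
    refine ⟨fun i => if NonAdj M r i then esgn M r t * esgn M t i else esgn M r i,
      fun i => ?_, fun i j => ?_⟩
    · dsimp only; split_ifs
      · rcases esgn_sign M r t with h | h <;> rcases esgn_sign M t i with h' | h' <;> simp [h, h']
      · exact esgn_sign _ _ _
    · by_cases hi : NonAdj M r i <;> by_cases hj : NonAdj M r j
      · obtain ⟨e, he, c1, c2, c3⟩ := h3 t i j
        refine compat_of_eq c3 ?_
        simp only [if_pos hi, if_pos hj, esgn_eq he c1 (htj i hi), esgn_eq he c2 (htj j hj)]
        have : esgn M r t * esgn M r t = 1 := by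
          rcases esgn_sign M r t with h | h <;> simp [h]
        linear_combination (e i * e j * (e t * e t)) * this + (e i * e j) * sq_sign he t
      · obtain ⟨e, c, h⟩ := mixed j i hj hi
        refine compat_of_eq (compat_symm c) ?_
        simp only [if_pos hi, if_neg hj]
        linear_combination h
      · obtain ⟨e, c, h⟩ := mixed i j hi hj
        refine compat_of_eq c ?_
        simp only [if_neg hi, if_pos hj]
        linear_combination h
      · obtain ⟨e, he, c1, c2, c3⟩ := h3 r i j
        refine compat_of_eq c3 ?_
        simp only [if_neg hi, if_neg hj, esgn_eq he c1 hi, esgn_eq he c2 hj]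
        linear_combination (e i * e j) * sq_sign he r
  · push Not at ht
    have hno : ∀ i, NonAdj M r i → ¬ NonAdj M r' i := by
      intro i h1 h2
      exact (hM i).ne' (hN _ _ _ _ h1.symm hrr' h2).1
    refine ⟨fun i => if NonAdj M r i then esgn M r' i else esgn M r i,
      fun i => ?_, fun i j => ?_⟩
    · dsimp only; split_ifs <;> exact esgn_sign _ _ _
    · by_cases hi : NonAdj M r i <;> by_cases hj : NonAdj M r j
      · obtain ⟨e, he, c1, c2, c3⟩ := h3 r' i j
        refine compat_of_eq c3 ?_
        simp only [if_pos hi, if_pos hj, esgn_eq he c1 (hno i hi), esgn_eq he c2 (hno j hj)]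
        linear_combination (e i * e j) * sq_sign he r'
      · exact compat_of_nonAdj (hN _ _ _ _ (ht j hj).symm hrr'.symm hi).symm
      · exact compat_of_nonAdj (hN _ _ _ _ (ht i hi).symm hrr'.symm hj)
      · obtain ⟨e, he, c1, c2, c3⟩ := h3 r i j
        refine compat_of_eq c3 ?_
        simp only [if_neg hi, if_neg hj, esgn_eq he c1 hi, esgn_eq he c2 hj]
        linear_combination (e i * e j) * sq_sign he r

lemma three_case {ι : Type*} (M : ι → ι → ℝ) (hM : ∀ i, 0 < M i i)
    (hN : ∀ a b c d, NonAdj M a b → NonAdj M c d → a = c ∨ a = d)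
    (h3 : ∀ i j k, ∃ e : ι → ℝ,
      IsSign e ∧ Compat M e i j ∧ Compat M e i k ∧ Compat M e j k) :
    ∃ d, IsSign d ∧ ∀ i j, Compat M d i j := by
  by_cases h : ∃ r, ∀ i, ¬ NonAdj M r i
  · obtain ⟨r, hr⟩ := h
    exact star_case M h3 r hr
  push Not at h
  refine ⟨fun _ => 1, fun _ => Or.inl rfl, fun i j => ?_⟩
  by_cases hij : i = j
  · subst hij; simp [Compat, (hM i).le]
  · apply compat_of_nonAdj
    obtain ⟨i', hi'⟩ := h i
    obtain ⟨j', hj'⟩ := h j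
    rcases hN _ _ _ _ hj' hi' with h1 | h1
    · exact absurd h1.symm hij
    · rw [h1]; exact hi'

/-- signs from an invariant cone -/
lemma signs_of_cone {ι : Type*} (A : ι → Matrix (Fin 2) (Fin 2) ℝ) (p f : ι → Fin 2 → ℝ)
    (b : ι → ℝ) (hA : ∀ i, HasData (A i) (p i) (f i) (b i)) {K : Set (Fin 2 → ℝ)}
    (hK : IsProperCone K) : ∃ e : ι → ℝ, IsSign e ∧ ∀ i j, InvariantUnder (A i) K →
      InvariantUnder (A j) K → Compat (fun i j => fev (f i) (p j)) e i j := by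
  have : ∀ i, ∃ e : ℝ, (e = 1 ∨ e = -1) ∧ (InvariantUnder (A i) K →
      e • p i ∈ K ∧ ∀ x ∈ K, 0 ≤ e * fev (f i) x) := by
    intro i
    by_cases h : InvariantUnder (A i) K
    · obtain ⟨e, h1, h2⟩ := sign_exists (hA i) hK h
      exact ⟨e, h1, fun _ => h2⟩
    · exact ⟨1, Or.inl rfl, fun h' => absurd h' h⟩
  choose e he1 he2 using this
  refine ⟨e, he1, fun i j hi hj => ⟨?_, ?_⟩⟩
  · have := (he2 i hi).2 _ (he2 j hj).1
    rw [fev_smul] at this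
    simp only; linarith
  · have := (he2 j hj).2 _ (he2 i hi).1
    rw [fev_smul] at this
    simp only; linarith

lemma cone_of_signs {ι : Type*} [Fintype ι] (A : ι → Matrix (Fin 2) (Fin 2) ℝ)
    (p f : ι → Fin 2 → ℝ)
    (b : ι → ℝ) (hA : ∀ i, HasData (A i) (p i) (f i) (b i))
    (h : ∃ d, IsSign d ∧ ∀ i j, Compat (fun i j => fev (f i) (p j)) d i j) :
    ∃ K : Set (Fin 2 → ℝ), IsProperCone K ∧ ∀ i, InvariantUnder (A i) K := by
  obtain ⟨d, hd, hc⟩ := h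
  have hev : ∀ i j, fev (d i • f i) (d j • p j) = d i * d j * fev (f i) (p j) := by
    intro i j; rw [fev_smul, smul_fev]; ring
  obtain ⟨K, hK, hp, hf⟩ := cone_exists (fun i => d i • p i) (fun i => d i • f i)
    (fun i => by
      simp only [hev, sq_sign hd, one_mul]; exact (hA i).2.1)
    (fun i j => by simp only [hev]; exact (hc i j).1)
  refine ⟨K, hK, fun i x hx => ?_⟩
  rw [(hA i).2.2]
  have h1 := hK.1 _ (hA i).1 _ hx
  have h2 := hK.1 _ (hf i x hx) _ (hp i)
  have h3 : fev (d i • f i) x • d i • p i = fev (f i) x • p i := by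
    rw [smul_fev, smul_smul]
    congr 1
    linear_combination (fev (f i) x) * sq_sign hd i
  simp only [h3] at h2
  exact hK.2.1 _ h1 _ h2


/-- Theorem: for a finite family of diagonalizable `2×2` Vandergraft
matrices with nonnegative determinants: if every four of them have a common
invariant proper cone, then the whole family does; and if at most one pair
of them is simultaneously diagonalizable, it suffices that every three of
them have a common invariant proper cone. -/
theorem four_matrices_suffice
    (n : ℕ) (A : Fin n → Matrix (Fin 2) (Fin 2) ℝ)
    (hdiag : ∀ j, IsDiagonalizable (A j))
    (hV : ∀ j, IsVandergraft (A j))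
    (hdet : ∀ j, 0 ≤ (A j).det) :
    ((∀ i j k l : Fin n, ∃ K : Set (Fin 2 → ℝ), IsProperCone K ∧
        InvariantUnder (A i) K ∧ InvariantUnder (A j) K ∧
        InvariantUnder (A k) K ∧ InvariantUnder (A l) K) →
      ∃ K : Set (Fin 2 → ℝ), IsProperCone K ∧ ∀ j, InvariantUnder (A j) K) ∧
    ((∀ i j k l : Fin n, i ≠ j → k ≠ l →
        SimDiag (A i) (A j) → SimDiag (A k) (A l) →
          ({i, j} : Finset (Fin n)) = {k, l}) →
      (∀ i j k : Fin n, ∃ K : Set (Fin 2 → ℝ), IsProperCone K ∧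
        InvariantUnder (A i) K ∧ InvariantUnder (A j) K ∧ InvariantUnder (A k) K) →
      ∃ K : Set (Fin 2 → ℝ), IsProperCone K ∧ ∀ j, InvariantUnder (A j) K) := by


  classical
  set S : Fin n → Prop := fun j => ∃ p f b, HasData (A j) p f b with hS
  have hdata : ∀ i : {j // S j}, ∃ p f b, HasData (A i) p f b := fun i => i.2
  choose p f b hA using hdata
  have hscal : ∀ j, ¬ S j → ∀ K, IsProperCone K → InvariantUnder (A j) K := by
    intro j hj K hK x hx
    rcases data_exists (A j) (hdiag j) (hV j) (hdet j) with ⟨c, hc, h⟩ | h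
    · rw [h]; exact hK.1 _ hc _ hx
    · exact absurd h hj
  have fin : (∃ d, IsSign d ∧ ∀ i j : {j // S j},
      Compat (fun i j => fev (f i) (p j)) d i j) →
      ∃ K : Set (Fin 2 → ℝ), IsProperCone K ∧ ∀ j, InvariantUnder (A j) K := by
    intro h
    obtain ⟨K, hK, hI⟩ := cone_of_signs (fun i : {j // S j} => A i) p f b hA h
    refine ⟨K, hK, fun j => ?_⟩
    by_cases hj : S j
    · exact hI ⟨j, hj⟩
    · exact hscal j hj K hK
  refine ⟨fun h4 => fin ?_, fun huniq h3 => fin ?_⟩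
  · apply four_case
    · exact fun i => (hA i).2.1
    · intro a b' c d h1 h2 h3
      exact ⟨fev_transfer (hA b').p_ne (hA c).f_ne h1.1 h2.2 h3.1,
        fev_transfer (hA c).p_ne (hA b').f_ne h3.2 h2.1 h1.2⟩
    · intro i j k l
      obtain ⟨K, hK, hi, hj, hk, hl⟩ := h4 i j k l
      obtain ⟨e, he, hc⟩ := signs_of_cone (fun i : {j // S j} => A i) p f b hA hK
      exact ⟨e, he, hc _ _ hi hj, hc _ _ hi hk, hc _ _ hi hl, hc _ _ hj hk, hc _ _ hj hl,
        hc _ _ hk hl⟩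
  · apply three_case
    · exact fun i => (hA i).2.1
    · intro a b' c d h1 h2
      have ne : ∀ x y : {j // S j}, NonAdj (fun i j => fev (f i) (p j)) x y →
          (x : Fin n) ≠ y := by
        intro x y h hxy
        have hxy := Subtype.ext hxy
        subst hxy
        exact (hA x).2.1.ne' h.1
      have := huniq a b' c d (ne _ _ h1) (ne _ _ h2)
        (simDiag_of_null (hA a) (hA b') h1.1 h1.2) (simDiag_of_null (hA c) (hA d) h2.1 h2.2)
      have hm : (a : Fin n) ∈ ({(c : Fin n), (d : Fin n)} : Finset (Fin n)) := by
        rw [← this]; simp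
      simp only [Finset.mem_insert, Finset.mem_singleton] at hm
      exact hm.imp Subtype.ext Subtype.ext
    · intro i j k
      obtain ⟨K, hK, hi, hj, hk⟩ := h3 i j k
      obtain ⟨e, he, hc⟩ := signs_of_cone (fun i : {j // S j} => A i) p f b hA hK
      exact ⟨e, he, hc _ _ hi hj, hc _ _ hi hk, hc _ _ hj hk⟩
end

section
/- Let 𝒜 = {A₁,…,Aₙ} be a finite family of real 2×2 matrices, ordered so that det A_i < 0 exactly for i = 1,…,k, and let 𝒜₁ = 𝒜 ∪ {A_iA_j : det A_i < 0, det A_j < 0, A_iA_j not a scalar multiple of the identity}. Suppose every matrix in 𝒜₁ is a diagonalizable Vandergraft matrix, and suppose u₁,…,u_N are unit vectors, exactly one spanning each distinct dominant eigenline of the non-scalar matrices of 𝒜₁, whose directions are chosen so that Cone{u₁,…,u_N} is a proper cone whose interior contains no non-dominant eigenvector of any matrix of 𝒜₁. Set K = Cone{u_j : 1 ≤ j ≤ N} ∪ {A_i u_j : 1 ≤ i ≤ k, 1 ≤ j ≤ N}. Then there exists a proper cone invariant under every matrix of 𝒜 if and only if K is a proper cone, the interior of K contains no non-dominant eigenvector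 of any matrix in 𝒜₁, and no boundary ray of K is spanned by an eigenvector of any A_i with 1 ≤ i ≤ k. -/
/-- `coneGen X` is the smallest convex cone containing `X`. -/
def coneGen {m : ℕ} (X : Set (Fin m → ℝ)) : Set (Fin m → ℝ) :=
  ⋂₀ {K : Set (Fin m → ℝ) |
    (∀ a : ℝ, 0 ≤ a → ∀ x ∈ K, a • x ∈ K) ∧ (∀ x ∈ K, ∀ y ∈ K, x + y ∈ K) ∧ X ⊆ K}

/-- The spectral radius (largest eigenvalue) of a `2×2` Vandergraft matrix. -/
noncomputable def rho2 (A : Matrix (Fin 2) (Fin 2) ℝ) : ℝ :=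
  (A.trace + Real.sqrt (A.trace ^ 2 - 4 * A.det)) / 2

/-- `u` is a dominant eigenvector of `A`. -/
noncomputable def DomEigvec (A : Matrix (Fin 2) (Fin 2) ℝ) (u : Fin 2 → ℝ) : Prop :=
  u ≠ 0 ∧ A.mulVec u = rho2 A • u

/-- `v` is a non-dominant eigenvector of `A`. -/
noncomputable def NonDomEigvec (A : Matrix (Fin 2) (Fin 2) ℝ) (v : Fin 2 → ℝ) : Prop :=
  ∃ μ : ℝ, μ ≠ rho2 A ∧ v ≠ 0 ∧ A.mulVec v = μ • v

/-- The extended family `𝒜₁`: `𝒜` together with all products `A i * A j` of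
two negative-determinant members that are not scalar multiples of `I`. -/
def fam1 {n : ℕ} (A : Fin n → Matrix (Fin 2) (Fin 2) ℝ) :
    Set (Matrix (Fin 2) (Fin 2) ℝ) :=
  Set.range A ∪
    {M | ∃ i j : Fin n, (A i).det < 0 ∧ (A j).det < 0 ∧ M = A i * A j ∧
      ¬ ∃ c : ℝ, M = c • (1 : Matrix (Fin 2) (Fin 2) ℝ)}

/-- The cone `K` generated by the dominant eigenvectors `u j` together with
their images `A i *ᵥ u j` under the negative-determinant matrices
(`i < k`). -/
def bigCone (n k N : ℕ) (A : Fin n → Matrix (Fin 2) (Fin 2) ℝ)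
    (u : Fin N → (Fin 2 → ℝ)) : Set (Fin 2 → ℝ) :=
  coneGen (Set.range u ∪
    {w | ∃ i : Fin n, (i : ℕ) < k ∧ ∃ j : Fin N, w = (A i).mulVec (u j)})


namespace CIC

abbrev V2 := Fin 2 → ℝ

structure Dec (M : Matrix (Fin 2) (Fin 2) ℝ) (μ : ℝ) (u : V2) (φ : V2 →ₗ[ℝ] ℝ) : Prop where
  lt : μ < rho2 M
  ge : -rho2 M ≤ μ
  det : rho2 M * μ = M.det
  ne : u ≠ 0
  eig : M.mulVec u = rho2 M • u
  phiu : φ u = rho2 M - μ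
  dec : ∀ x, M.mulVec x = μ • x + φ x • u

def IsScalar (M : Matrix (Fin 2) (Fin 2) ℝ) : Prop :=
  ∃ c : ℝ, M = c • (1 : Matrix (Fin 2) (Fin 2) ℝ)

lemma disc_ne {M : Matrix (Fin 2) (Fin 2) ℝ} (hd : IsDiagonalizable M) (hns : ¬ IsScalar M) :
    M.trace ^ 2 - 4 * M.det ≠ 0 := by
  obtain ⟨P, hP, hD⟩ := hd
  intro h0
  apply hns
  have hPP : P * P⁻¹ = 1 := Matrix.mul_nonsing_inv P hP
  have hPP' : P⁻¹ * P = 1 := Matrix.nonsing_inv_mul P hP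
  set D := P⁻¹ * M * P with hDdef
  have hM : M = P * D * P⁻¹ := by
    calc M = (P * P⁻¹) * M * (P * P⁻¹) := by rw [hPP]; simp
      _ = P * D * P⁻¹ := by rw [hDdef]; simp only [Matrix.mul_assoc]
  have ht : M.trace = D.trace := by
    rw [hM, Matrix.trace_mul_comm, ← Matrix.mul_assoc, hPP', Matrix.one_mul]
  have hdet : M.det = D.det := by
    rw [hM, Matrix.det_mul, Matrix.det_mul, mul_right_comm, ← Matrix.det_mul, hPP]; simp
  have h01 : D 0 1 = 0 := hD (by decide)
  have h10 : D 1 0 = 0 := hD (by decide)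
  rw [ht, hdet, Matrix.trace_fin_two, Matrix.det_fin_two, h01, h10] at h0
  have heq : D 0 0 = D 1 1 := by
    have : (D 0 0 - D 1 1) ^ 2 = 0 := by linarith
    have := pow_eq_zero_iff (two_ne_zero) |>.1 this
    linarith
  have hDs : D = (D 0 0) • (1 : Matrix (Fin 2) (Fin 2) ℝ) := by
    ext i j
    fin_cases i <;> fin_cases j <;> simp [h01, h10, heq]
  refine ⟨D 0 0, ?_⟩
  rw [hM, hDs]
  simp [hPP]

lemma exists_dec {M : Matrix (Fin 2) (Fin 2) ℝ} (hV : IsVandergraft M) (hd : IsDiagonalizable M)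
    (hns : ¬ IsScalar M) :
    (∃ u, DomEigvec M u) ∧ ∀ u, DomEigvec M u → ∃ μ φ, Dec M μ u φ := by
  have hne := disc_ne hd hns
  obtain ⟨hV1, hV2⟩ := hV
  set s := Real.sqrt (M.trace ^ 2 - 4 * M.det) with hs
  have hs2 : s ^ 2 = M.trace ^ 2 - 4 * M.det := Real.sq_sqrt (by linarith)
  have hs0 : 0 < s := Real.sqrt_pos.2 (lt_of_le_of_ne (by linarith) (Ne.symm hne))
  have hρ : rho2 M = (M.trace + s) / 2 := rfl
  set ρ := rho2 M with hρd
  have htr := Matrix.trace_fin_two M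
  have hdt := Matrix.det_fin_two M
  obtain ⟨μ, hμ⟩ : ∃ μ, μ = (M.trace - s) / 2 := ⟨_, rfl⟩
  have hsum : M 0 0 + M 1 1 = ρ + μ := by rw [hρ, hμ, ← htr]; ring
  have hprod : M 0 0 * M 1 1 - M 0 1 * M 1 0 = ρ * μ := by
    rw [hρ, hμ, ← hdt]; linear_combination (1/4) * hs2
  have hlt : μ < ρ := by rw [hρ, hμ]; linarith
  have hge : -ρ ≤ μ := by linarith
  clear_value ρ s
  generalize ha : M 0 0 = a at *
  generalize hb : M 0 1 = b at *
  generalize hc : M 1 0 = c at *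
  generalize hdd : M 1 1 = d at *
  have mv0 : ∀ x : V2, M.mulVec x 0 = a * x 0 + b * x 1 := by
    intro x; simp [Matrix.mulVec, dotProduct, Fin.sum_univ_two, ha, hb]
  have mv1 : ∀ x : V2, M.mulVec x 1 = c * x 0 + d * x 1 := by
    intro x; simp [Matrix.mulVec, dotProduct, Fin.sum_univ_two, hc, hdd]
  have hker : ∀ x : V2, M.mulVec (M.mulVec x - μ • x) = ρ • (M.mulVec x - μ • x) := by
    intro x
    ext i
    fin_cases i
    · simp only [Fin.zero_eta, mv0, mv1, Pi.sub_apply, Pi.smul_apply, smul_eq_mul]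
      linear_combination (a * x 0 + b * x 1) * hsum - x 0 * hprod
    · simp only [Fin.mk_one, mv0, mv1, Pi.sub_apply, Pi.smul_apply, smul_eq_mul]
      linear_combination (c * x 0 + d * x 1) * hsum - x 1 * hprod
  have hscal : ∀ r : ℝ, a = r → d = r → b = 0 → c = 0 → False := by
    intro r h1 h2 h3 h4
    apply hns
    refine ⟨r, ?_⟩
    ext i j
    fin_cases i <;> fin_cases j <;> simp [ha, hb, hc, hdd, h1, h2, h3, h4]
  constructor
  · by_contra hcon
    push Not at hcon
    have hz : ∀ x : V2, M.mulVec x - μ • x = 0 := by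
      intro x
      by_contra h
      exact hcon _ ⟨h, by rw [← hρd]; exact hker x⟩
    have h1 := congrFun (hz ![1, 0]) 0
    have h2 := congrFun (hz ![1, 0]) 1
    have h3 := congrFun (hz ![0, 1]) 0
    have h4 := congrFun (hz ![0, 1]) 1
    rw [Pi.sub_apply, mv0] at h1 h3
    rw [Pi.sub_apply, mv1] at h2 h4
    simp at h1 h2 h3 h4
    exact hscal μ (by linarith) (by linarith) h3 h2
  · rintro u ⟨hu, hMu⟩
    rw [← hρd] at hMu
    have hq : 0 < u 0 ^ 2 + u 1 ^ 2 := by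
      by_contra h
      apply hu
      have h0 : u 0 = 0 := by nlinarith [sq_nonneg (u 0), sq_nonneg (u 1)]
      have h1 : u 1 = 0 := by nlinarith [sq_nonneg (u 0), sq_nonneg (u 1)]
      ext i; fin_cases i <;> simp [h0, h1]
    have e0 := congrFun hMu 0
    have e1 := congrFun hMu 1
    simp only [mv0, mv1, Pi.smul_apply, smul_eq_mul] at e0 e1
    have hpar : ∀ w : V2, M.mulVec w = ρ • w → u 0 * w 1 - u 1 * w 0 = 0 := by
      intro w hw
      have f0 := congrFun hw 0
      have f1 := congrFun hw 1
      simp only [mv0, mv1, Pi.smul_apply, smul_eq_mul] at f0 f1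
      by_contra h
      have g1 : (a - ρ) * (u 0 * w 1 - u 1 * w 0) = 0 := by linear_combination w 1 * e0 - u 1 * f0
      have g2 : b * (u 0 * w 1 - u 1 * w 0) = 0 := by linear_combination u 0 * f0 - w 0 * e0
      have g3 : c * (u 0 * w 1 - u 1 * w 0) = 0 := by linear_combination w 1 * e1 - u 1 * f1
      have g4 : (d - ρ) * (u 0 * w 1 - u 1 * w 0) = 0 := by linear_combination u 0 * f1 - w 0 * e1
      have g1 := (mul_eq_zero.1 g1).resolve_right h
      have g2 := (mul_eq_zero.1 g2).resolve_right h
      have g3 := (mul_eq_zero.1 g3).resolve_right h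
      have g4 := (mul_eq_zero.1 g4).resolve_right h
      exact hscal ρ (by linarith) (by linarith) g2 g3
    let φ : V2 →ₗ[ℝ] ℝ :=
      { toFun := fun x => (u 0 * (M.mulVec x 0 - μ * x 0) + u 1 * (M.mulVec x 1 - μ * x 1))
          / (u 0 ^ 2 + u 1 ^ 2)
        map_add' := by
          intro x y
          simp only [mv0, mv1, Pi.add_apply]
          ring
        map_smul' := by
          intro r y
          simp only [mv0, mv1, Pi.smul_apply, smul_eq_mul, RingHom.id_apply]
          ring }
    have hφ : ∀ x, φ x = (u 0 * (M.mulVec x 0 - μ * x 0) + u 1 * (M.mulVec x 1 - μ * x 1))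
          / (u 0 ^ 2 + u 1 ^ 2) := fun x => rfl
    refine ⟨μ, φ, ⟨by rw [← hρd]; exact hlt, by rw [← hρd]; exact hge,
      by rw [← hρd, hdt, hprod], hu, by rw [← hρd]; exact hMu, ?_, ?_⟩⟩
    · rw [hφ, ← hρd, hMu, div_eq_iff hq.ne']
      simp only [Pi.smul_apply, smul_eq_mul]
      ring
    · intro x
      have hp := hpar _ (hker x)
      simp only [Pi.sub_apply, Pi.smul_apply, smul_eq_mul] at hp
      ext i
      fin_cases i
      · simp only [Fin.zero_eta, Pi.add_apply, Pi.smul_apply, smul_eq_mul, hφ]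
        field_simp
        linear_combination (-u 1) * hp
      · simp only [Fin.mk_one, Pi.add_apply, Pi.smul_apply, smul_eq_mul, hφ]
        field_simp
        linear_combination (u 0) * hp

lemma rho_smul_one (c : ℝ) : rho2 (c • (1 : Matrix (Fin 2) (Fin 2) ℝ)) = c := by
  have h : (c • (1 : Matrix (Fin 2) (Fin 2) ℝ)).trace ^ 2
      - 4 * (c • (1 : Matrix (Fin 2) (Fin 2) ℝ)).det = 0 := by
    rw [Matrix.trace_fin_two, Matrix.det_fin_two]; simp; ring
  unfold rho2
  rw [h, Matrix.trace_fin_two]; simp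

lemma not_scalar_of_nonDom {M : Matrix (Fin 2) (Fin 2) ℝ} {v : V2} (h : NonDomEigvec M v) :
    ¬ IsScalar M := by
  rintro ⟨c, rfl⟩
  obtain ⟨m, hm, hv, he⟩ := h
  rw [rho_smul_one] at hm
  simp only [Matrix.smul_mulVec, Matrix.one_mulVec] at he
  have : (c - m) • v = 0 := by rw [sub_smul, he, sub_self]
  rcases smul_eq_zero.1 this with h | h
  · apply hm; linarith
  · exact hv h

namespace Dec
variable {M : Matrix (Fin 2) (Fin 2) ℝ} {μ : ℝ} {u : V2} {φ : V2 →ₗ[ℝ] ℝ}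

lemma rho_pos (h : Dec M μ u φ) : 0 < rho2 M := by linarith [h.lt, h.ge]

lemma phiu_pos (h : Dec M μ u φ) : 0 < φ u := by rw [h.phiu]; linarith [h.lt]

lemma nonDom (h : Dec M μ u φ) {v : V2} (hv : NonDomEigvec M v) : φ v = 0 := by
  obtain ⟨m, hm, -, he⟩ := hv
  have := congrArg φ (h.dec v)
  rw [he] at this
  simp only [map_smul, map_add, smul_eq_mul, h.phiu] at this
  have h2 : (m - rho2 M) * φ v = 0 := by linear_combination this
  exact (mul_eq_zero.1 h2).resolve_left (sub_ne_zero.2 hm)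

lemma nonDom' (h : Dec M μ u φ) {v : V2} (hv : φ v = 0) (h0 : v ≠ 0) : NonDomEigvec M v :=
  ⟨μ, h.lt.ne, h0, by rw [h.dec, hv]; simp⟩

lemma mu_neg (h : Dec M μ u φ) (hd : M.det < 0) : μ < 0 := by
  have := h.det
  have := h.rho_pos
  nlinarith

lemma mu_nonneg (h : Dec M μ u φ) (hd : 0 ≤ M.det) : 0 ≤ μ := by
  have := h.det
  have := h.rho_pos
  by_contra hc
  nlinarith

end Dec

/-! cones -/

lemma interior_add {K : Set V2} (hadd : ∀ x ∈ K, ∀ y ∈ K, x + y ∈ K) {p x : V2}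
    (hp : p ∈ interior K) (hx : x ∈ K) : p + x ∈ interior K := by
  rw [mem_interior] at hp ⊢
  obtain ⟨O, hO, hOo, hpO⟩ := hp
  refine ⟨(fun y => y - x) ⁻¹' O, ?_, hOo.preimage (by fun_prop), by simpa using hpO⟩
  intro y hy
  have := hadd _ (hO hy) _ hx
  simpa using this

lemma interior_smul {K : Set V2} (hs : ∀ a : ℝ, 0 ≤ a → ∀ x ∈ K, a • x ∈ K) {p : V2} {a : ℝ}
    (ha : 0 < a) (hp : p ∈ interior K) : a • p ∈ interior K := by
  rw [mem_interior] at hp ⊢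
  obtain ⟨O, hO, hOo, hpO⟩ := hp
  refine ⟨(fun y => a⁻¹ • y) ⁻¹' O, ?_, hOo.preimage (by fun_prop), ?_⟩
  · intro y hy
    have := hs a ha.le _ (hO hy)
    simpa [smul_smul, ha.ne'] using this
  · simpa [smul_smul, ha.ne'] using hpO

lemma interior_perturb {K : Set V2} {p : V2} (hp : p ∈ interior K) (w : V2) :
    ∃ ε : ℝ, 0 < ε ∧ p + ε • w ∈ K ∧ p - ε • w ∈ K := by
  have hK : K ∈ nhds p := mem_interior_iff_mem_nhds.1 hp
  have c1 : Filter.Tendsto (fun t : ℝ => p + t • w) (nhds 0) (nhds p) := by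
    have : Continuous (fun t : ℝ => p + t • w) := by fun_prop
    simpa using this.tendsto 0
  have c2 : Filter.Tendsto (fun t : ℝ => p - t • w) (nhds 0) (nhds p) := by
    have : Continuous (fun t : ℝ => p - t • w) := by fun_prop
    simpa using this.tendsto 0
  have := (c1.eventually hK).and (c2.eventually hK)
  have h2 := (this.filter_mono (nhdsWithin_le_nhds (s := Set.Ioi 0))).and self_mem_nhdsWithin
  obtain ⟨ε, ⟨h1, h3⟩, h4⟩ := h2.exists
  exact ⟨ε, h4, h1, h3⟩

lemma pointed {K : Set V2} (hK : IsProperCone K) {x : V2} (h1 : x ∈ K) (h2 : -x ∈ K) : x = 0 := by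
  have : x ∈ K ∩ (-K) := ⟨h1, by simpa using h2⟩
  rw [hK.2.2.2.1] at this
  simpa using this

lemma pointed_smul {K : Set V2} (hK : IsProperCone K) {x : V2} {c : ℝ} (hc : c < 0)
    (h1 : x ∈ K) (h2 : c • x ∈ K) : x = 0 := by
  apply pointed hK h1
  have := hK.1 (-c)⁻¹ (by rw [inv_nonneg]; linarith) _ h2
  rw [smul_smul] at this
  have e : (-c)⁻¹ * c = -1 := by field_simp [hc.ne]
  rw [e] at this
  simpa using this

lemma zero_notMem_interior {K : Set V2} (hK : IsProperCone K) : (0 : V2) ∉ interior K := by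
  intro h
  obtain ⟨ε, hε, h1, h2⟩ := interior_perturb h (fun _ => 1)
  have := pointed hK h1 (by simpa using h2)
  have := congrFun this 0
  simp at this
  exact hε.ne' this

/-- Half-plane lemma -/
lemma Dec.nonneg_on {M : Matrix (Fin 2) (Fin 2) ℝ} {μ : ℝ} {u : V2} {φ : V2 →ₗ[ℝ] ℝ}
    (h : Dec M μ u φ) {K : Set V2} (hK : IsProperCone K) (hu : u ∈ K)
    (hint : ∀ v, NonDomEigvec M v → v ∉ interior K) {x : V2} (hx : x ∈ K) : 0 ≤ φ x := by
  have hne : ∀ p ∈ interior K, φ p ≠ 0 := by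
    intro p hp h0
    refine hint p (h.nonDom' h0 ?_) hp
    rintro rfl
    exact zero_notMem_interior hK hp
  obtain ⟨p, hp⟩ := hK.2.2.2.2
  have hup := h.phiu_pos
  have key : ∀ q ∈ interior K, ∀ y ∈ K, 0 < φ y → 0 < φ q := by
    intro q hq y hy hpos
    by_contra hc
    push Not at hc
    have hlt := lt_of_le_of_ne hc (hne q hq)
    have := interior_add hK.2.1 hq (hK.1 (- φ q / φ y) (div_nonneg (by linarith) hpos.le) y hy)
    apply hne _ this
    simp only [map_add, map_smul, smul_eq_mul]
    field_simp
    ring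
  have hpp := key p hp u hu hup
  by_contra hc
  push Not at hc
  have := interior_add hK.2.1 hp (hK.1 (φ p / (-φ x)) (div_nonneg hpp.le (by linarith)) x hx)
  apply hne _ this
  simp only [map_add, map_smul, smul_eq_mul]
  field_simp [hc.ne]
  ring

/-- Krein-Rutman lemma -/
lemma Dec.phi_smul_mem {M : Matrix (Fin 2) (Fin 2) ℝ} {μ : ℝ} {u : V2} {φ : V2 →ₗ[ℝ] ℝ}
    (h : Dec M μ u φ) {C : Set V2} (hC : IsProperCone C) (hinv : InvariantUnder M C)
    {x : V2} (hx : x ∈ C) : φ x • u ∈ C := by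
  rcases le_or_gt μ 0 with hμ | hμ
  · have := hC.2.1 _ (hinv x hx) _ (hC.1 (-μ) (by linarith) x hx)
    rw [h.dec x] at this
    convert this using 1
    module
  · have hρ := h.rho_pos
    have hgap : rho2 M - μ ≠ 0 := by linarith [h.lt]
    have hmem : ∀ n : ℕ, ((μ / rho2 M) ^ n) • x
        + ((1 - (μ / rho2 M) ^ n) * (φ x / (rho2 M - μ))) • u ∈ C := by
      intro n
      induction n with
      | zero => simpa using hx
      | succ n ih =>
        have := hC.1 (rho2 M)⁻¹ (inv_nonneg.2 hρ.le) _ (hinv _ ih)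
        convert this using 1
        rw [Matrix.mulVec_add, Matrix.mulVec_smul, Matrix.mulVec_smul, h.eig, h.dec x]
        have e1 : (μ / rho2 M) ^ (n + 1) = (rho2 M)⁻¹ * ((μ / rho2 M) ^ n * μ) := by
          rw [pow_succ]; field_simp
        rw [e1]
        generalize (μ / rho2 M) ^ n = t
        match_scalars
        · field_simp
        · field_simp
          ring
    have hlim : Filter.Tendsto (fun n : ℕ => ((μ / rho2 M) ^ n) • x
        + ((1 - (μ / rho2 M) ^ n) * (φ x / (rho2 M - μ))) • u) Filter.atTop
        (nhds ((φ x / (rho2 M - μ)) • u)) := by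
      have ht : Filter.Tendsto (fun n : ℕ => (μ / rho2 M) ^ n) Filter.atTop (nhds 0) :=
        tendsto_pow_atTop_nhds_zero_of_lt_one (div_nonneg hμ.le hρ.le)
          ((div_lt_one hρ).2 h.lt)
      have hc : Continuous (fun t : ℝ => t • x + ((1 - t) * (φ x / (rho2 M - μ))) • u) := by
        fun_prop
      have := (hc.tendsto 0).comp ht
      simpa [Function.comp_def] using this
    have hm := hC.2.2.1.mem_of_tendsto hlim (Filter.Eventually.of_forall hmem)
    have := hC.1 (rho2 M - μ) (by linarith [h.lt]) _ hm
    rw [smul_smul] at this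
    convert this using 2
    field_simp

lemma Dec.interior_ne {M : Matrix (Fin 2) (Fin 2) ℝ} {μ : ℝ} {u : V2} {φ : V2 →ₗ[ℝ] ℝ}
    (h : Dec M μ u φ) {C : Set V2} (hC : IsProperCone C) (hinv : InvariantUnder M C)
    {p : V2} (hp : p ∈ interior C) : φ p ≠ 0 := by
  intro h0
  obtain ⟨ε, hε, h1, h2⟩ := interior_perturb hp u
  have h1 := h.phi_smul_mem hC hinv h1
  have h2 := h.phi_smul_mem hC hinv h2
  simp only [map_add, map_sub, map_smul, h0, smul_eq_mul, zero_add, zero_sub] at h1 h2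
  have := pointed hC h1 (by simpa using h2)
  rcases smul_eq_zero.1 this with h3 | h3
  · have := mul_pos hε h.phiu_pos
    linarith
  · exact h.ne h3

lemma Dec.mem_or {M : Matrix (Fin 2) (Fin 2) ℝ} {μ : ℝ} {u : V2} {φ : V2 →ₗ[ℝ] ℝ}
    (h : Dec M μ u φ) {C : Set V2} (hC : IsProperCone C) (hinv : InvariantUnder M C) :
    u ∈ C ∨ -u ∈ C := by
  obtain ⟨p, hp⟩ := hC.2.2.2.2
  have hne := h.interior_ne hC hinv hp
  have hm := h.phi_smul_mem hC hinv (interior_subset hp)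
  rcases lt_or_gt_of_ne hne with hlt | hgt
  · right
    have := hC.1 (-φ p)⁻¹ (inv_nonneg.2 (by linarith)) _ hm
    rw [smul_smul] at this
    have e : (-φ p)⁻¹ * φ p = -1 := by field_simp
    rw [e] at this
    simpa using this
  · left
    have := hC.1 (φ p)⁻¹ (inv_nonneg.2 hgt.le) _ hm
    rw [smul_smul, inv_mul_cancel₀ hne] at this
    simpa using this

/-! coneGen -/

lemma subset_coneGen (X : Set V2) : X ⊆ coneGen X := by
  intro x hx K hK
  exact hK.2.2 hx

lemma coneGen_subset {X K : Set V2} (h1 : ∀ a : ℝ, 0 ≤ a → ∀ x ∈ K, a • x ∈ K)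
    (h2 : ∀ x ∈ K, ∀ y ∈ K, x + y ∈ K) (h3 : X ⊆ K) : coneGen X ⊆ K :=
  fun _ hx => hx K ⟨h1, h2, h3⟩

lemma coneGen_smul {X : Set V2} : ∀ a : ℝ, 0 ≤ a → ∀ x ∈ coneGen X, a • x ∈ coneGen X :=
  fun a ha x hx K hK => hK.1 a ha x (hx K hK)

lemma coneGen_add {X : Set V2} : ∀ x ∈ coneGen X, ∀ y ∈ coneGen X, x + y ∈ coneGen X :=
  fun x hx y hy K hK => hK.2.1 x (hx K hK) y (hy K hK)

lemma coneGen_mono {X Y : Set V2} (h : X ⊆ Y) : coneGen X ⊆ coneGen Y :=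
  coneGen_subset coneGen_smul coneGen_add (h.trans (subset_coneGen Y))

lemma coneGen_map {X K : Set V2} (M : Matrix (Fin 2) (Fin 2) ℝ)
    (h1 : ∀ a : ℝ, 0 ≤ a → ∀ x ∈ K, a • x ∈ K)
    (h2 : ∀ x ∈ K, ∀ y ∈ K, x + y ∈ K) (h3 : ∀ x ∈ X, M.mulVec x ∈ K) :
    ∀ x ∈ coneGen X, M.mulVec x ∈ K := by
  have : coneGen X ⊆ {x | M.mulVec x ∈ K} := by
    apply coneGen_subset
    · intro a ha x hx
      simp only [Set.mem_ofPred_eq, Matrix.mulVec_smul] at *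
      exact h1 a ha _ hx
    · intro x hx y hy
      simp only [Set.mem_ofPred_eq, Matrix.mulVec_add] at *
      exact h2 _ hx _ hy
    · exact h3
  exact this

lemma phi_coord (φ : V2 →ₗ[ℝ] ℝ) : ∃ p q : ℝ, ∀ x, φ x = p * x 0 + q * x 1 := by
  refine ⟨φ ![1, 0], φ ![0, 1], fun x => ?_⟩
  have : x = x 0 • ![1, 0] + x 1 • ![0, 1] := by
    ext i; fin_cases i <;> simp
  conv_lhs => rw [this]
  rw [map_add, map_smul, map_smul, smul_eq_mul, smul_eq_mul]; ring

lemma isClosed_coneGen {G : Set V2} (hfin : G.Finite) (φ : V2 →ₗ[ℝ] ℝ)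
    (hpos : ∀ g ∈ G, 0 < φ g) (hint : (interior (coneGen G)).Nonempty) (hne : G.Nonempty) :
    IsClosed (coneGen G) := by
  obtain ⟨p, q, hφ⟩ := phi_coord φ
  obtain ⟨m, hm, hmin⟩ := Set.exists_min_image G (fun g => (p * g 1 - q * g 0) / φ g) hfin hne
  obtain ⟨M, hM, hmax⟩ := Set.exists_max_image G (fun g => (p * g 1 - q * g 0) / φ g) hfin hne
  have hm0 := hpos m hm
  have hM0 := hpos M hM
  have hpq : 0 < p ^ 2 + q ^ 2 := by
    by_contra h
    have h1 : p = 0 := by nlinarith [sq_nonneg p, sq_nonneg q]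
    have h2 : q = 0 := by nlinarith [sq_nonneg p, sq_nonneg q]
    rw [hφ, h1, h2] at hm0
    simp at hm0
  have cmp : ∀ g h : V2, 0 < φ g → 0 < φ h →
      (p * g 1 - q * g 0) / φ g ≤ (p * h 1 - q * h 0) / φ h → 0 ≤ g 0 * h 1 - g 1 * h 0 := by
    intro g h hg hh hle
    rw [div_le_div_iff₀ hg hh, hφ, hφ] at hle
    have : 0 ≤ (p ^ 2 + q ^ 2) * (g 0 * h 1 - g 1 * h 0) := by linarith
    exact nonneg_of_mul_nonneg_right this hpq
  let S : Set V2 := {x | 0 ≤ m 0 * x 1 - m 1 * x 0 ∧ 0 ≤ x 0 * M 1 - x 1 * M 0}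
  have hGS : coneGen G ⊆ S := by
    apply coneGen_subset
    · rintro a ha x ⟨h1, h2⟩
      refine ⟨?_, ?_⟩
      · have := mul_nonneg ha h1
        simp only [Pi.smul_apply, smul_eq_mul]; linarith
      · have := mul_nonneg ha h2
        simp only [Pi.smul_apply, smul_eq_mul]; linarith
    · rintro x ⟨h1, h2⟩ y ⟨h3, h4⟩
      refine ⟨?_, ?_⟩ <;> simp only [Pi.add_apply] <;> linarith
    · intro g hg
      exact ⟨cmp _ _ hm0 (hpos g hg) (hmin g hg), cmp _ _ (hpos g hg) hM0 (hmax g hg)⟩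
  have hdet0 : 0 ≤ m 0 * M 1 - m 1 * M 0 := (hGS (subset_coneGen G hM)).1
  have hid : ∀ x : V2, (m 0 * M 1 - m 1 * M 0) • x
      = (x 0 * M 1 - x 1 * M 0) • m + (m 0 * x 1 - m 1 * x 0) • M := by
    intro x
    ext i; fin_cases i <;> simp <;> ring
  have hdet : 0 < m 0 * M 1 - m 1 * M 0 := by
    refine lt_of_le_of_ne hdet0 (fun h => ?_)
    have hz : ∀ x ∈ coneGen G, m 0 * x 1 - m 1 * x 0 = 0 := by
      intro x hx
      have e := congrArg φ (hid x)
      rw [← h] at e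
      simp only [zero_smul, map_zero, map_add, map_smul, smul_eq_mul] at e
      obtain ⟨h1, h2⟩ := hGS hx
      have h3 := mul_nonneg h1 hM0.le
      have h4 := mul_nonneg h2 hm0.le
      have h5 : (m 0 * x 1 - m 1 * x 0) * φ M = 0 := by linarith
      exact (mul_eq_zero.1 h5).resolve_right hM0.ne'
    obtain ⟨r, hr⟩ := hint
    obtain ⟨ε, hε, h1, -⟩ := interior_perturb hr ![-m 1, m 0]
    have z1 := hz _ h1
    have z2 := hz _ (interior_subset hr)
    simp at z1
    have z3 : ε * (m 0 ^ 2 + m 1 ^ 2) = 0 := by linarith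
    have z4 := (mul_eq_zero.1 z3).resolve_left hε.ne'
    have a0 : m 0 = 0 := by nlinarith [sq_nonneg (m 0), sq_nonneg (m 1)]
    have a1 : m 1 = 0 := by nlinarith [sq_nonneg (m 0), sq_nonneg (m 1)]
    rw [hφ, a0, a1] at hm0
    simp at hm0
  have hSG : S ⊆ coneGen G := by
    rintro x ⟨h1, h2⟩
    have := coneGen_add _ (coneGen_smul _ h2 _ (subset_coneGen G hm))
      _ (coneGen_smul _ h1 _ (subset_coneGen G hM))
    rw [← hid] at this
    have := coneGen_smul _ (inv_nonneg.2 hdet.le) _ this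
    rwa [smul_smul, inv_mul_cancel₀ hdet.ne', one_smul] at this
  rw [Set.Subset.antisymm hGS hSG]
  have c1 : Continuous (fun x : V2 => m 0 * x 1 - m 1 * x 0) := by fun_prop
  have c2 : Continuous (fun x : V2 => x 0 * M 1 - x 1 * M 0) := by fun_prop
  exact (isClosed_le continuous_const c1).inter (isClosed_le continuous_const c2)

lemma neg_proper {C : Set V2} (hC : IsProperCone C) : IsProperCone (-C) := by
  obtain ⟨h1, h2, h3, h4, h5⟩ := hC
  refine ⟨?_, ?_, h3.neg, ?_, ?_⟩
  · intro a ha x hx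
    simp only [Set.mem_neg] at *
    rw [← smul_neg]; exact h1 a ha _ hx
  · intro x hx y hy
    simp only [Set.mem_neg] at *
    rw [neg_add]; exact h2 _ hx _ hy
  · rw [neg_neg, Set.inter_comm]; exact h4
  · obtain ⟨p, hp⟩ := h5
    refine ⟨-p, ?_⟩
    rw [mem_interior] at hp ⊢
    obtain ⟨O, hO, hOo, hpO⟩ := hp
    exact ⟨-O, Set.neg_subset_neg.2 hO, hOo.neg, by simpa using hpO⟩

lemma neg_inv {C : Set V2} {M : Matrix (Fin 2) (Fin 2) ℝ} (h : InvariantUnder M C) :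
    InvariantUnder M (-C) := by
  intro x hx
  simp only [Set.mem_neg] at *
  have := h _ hx
  rwa [Matrix.mulVec_neg] at this

lemma not_scalar_of_det_neg {M : Matrix (Fin 2) (Fin 2) ℝ} (h : M.det < 0) : ¬ IsScalar M := by
  rintro ⟨c, rfl⟩
  rw [Matrix.det_fin_two] at h
  simp at h
  nlinarith [mul_self_nonneg c]

end CIC

/-- Theorem: with all matrices of the extended family `𝒜₁` diagonalizable
Vandergraft matrices, `det A i < 0` exactly for `i < k`, and `u 1, …, u N`
unit vectors, one for each distinct dominant eigenline of the non-scalar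
matrices of `𝒜₁`, chosen so that the cone they generate is proper and its
interior is free of non-dominant eigenvectors: a common invariant proper
cone for `𝒜` exists iff `K = bigCone` is proper, its interior contains no
non-dominant eigenvector of any matrix of `𝒜₁`, and no eigenvector of any
`A i` with `i < k` lies on the boundary of `K`. -/
theorem common_invariant_cone_all_diagonalizable
    (n k N : ℕ) (A : Fin n → Matrix (Fin 2) (Fin 2) ℝ)
    (hk : ∀ i : Fin n, (A i).det < 0 ↔ (i : ℕ) < k)
    (hVd : ∀ M ∈ fam1 A, IsVandergraft M ∧ IsDiagonalizable M)
    (u : Fin N → (Fin 2 → ℝ))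
    (hunit : ∀ j, (u j 0) ^ 2 + (u j 1) ^ 2 = 1)
    (hrep : ∀ j, ∃ M ∈ fam1 A,
      (¬ ∃ c : ℝ, M = c • (1 : Matrix (Fin 2) (Fin 2) ℝ)) ∧ DomEigvec M (u j))
    (hall : ∀ M ∈ fam1 A, (¬ ∃ c : ℝ, M = c • (1 : Matrix (Fin 2) (Fin 2) ℝ)) →
      ∀ v, DomEigvec M v → ∃ (j : Fin N) (c : ℝ), v = c • u j)
    (hinj : ∀ j j' : Fin N,
      Submodule.span ℝ {u j} = Submodule.span ℝ {u j'} → j = j')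
    (hUproper : IsProperCone (coneGen (Set.range u)))
    (hUint : ∀ M ∈ fam1 A, ∀ v, NonDomEigvec M v →
      v ∉ interior (coneGen (Set.range u))) :
    (∃ C : Set (Fin 2 → ℝ), IsProperCone C ∧ ∀ i, InvariantUnder (A i) C) ↔
      (IsProperCone (bigCone n k N A u) ∧
        (∀ M ∈ fam1 A, ∀ v, NonDomEigvec M v → v ∉ interior (bigCone n k N A u)) ∧
        (∀ i : Fin n, (i : ℕ) < k → ∀ v : Fin 2 → ℝ, v ≠ 0 →
          (∃ μ : ℝ, (A i).mulVec v = μ • v) → v ∉ frontier (bigCone n k N A u))) := by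
  have hdecj : ∀ M ∈ fam1 A, ¬ CIC.IsScalar M → ∃ j μ φ, CIC.Dec M μ (u j) φ := by
    intro M hM hns
    obtain ⟨⟨w, hw⟩, hd⟩ := CIC.exists_dec (hVd M hM).1 (hVd M hM).2 hns
    obtain ⟨j, c, rfl⟩ := hall M hM hns w hw
    have hc : c ≠ 0 := by
      rintro rfl
      exact hw.1 (by simp)
    have hdom : DomEigvec M (u j) := by
      refine ⟨fun h => hw.1 (by rw [h]; simp), ?_⟩
      have h2 := hw.2
      rw [Matrix.mulVec_smul, smul_comm] at h2
      exact smul_right_injective _ hc h2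
    obtain ⟨μ, φ, h⟩ := hd _ hdom
    exact ⟨j, μ, φ, h⟩
  have hu0 : ∀ j, u j ≠ 0 := by
    intro j h
    have := hunit j
    rw [h] at this
    simp at this
  have hAfam : ∀ i, A i ∈ fam1 A := fun i => Or.inl ⟨i, rfl⟩
  have hUsub : coneGen (Set.range u) ⊆ bigCone n k N A u :=
    CIC.coneGen_mono Set.subset_union_left
  have huU : ∀ j, u j ∈ coneGen (Set.range u) := fun j => CIC.subset_coneGen _ ⟨j, rfl⟩
  have huK : ∀ j, u j ∈ bigCone n k N A u := fun j => hUsub (huU j)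
  have hAuK : ∀ i : Fin n, (i : ℕ) < k → ∀ j, (A i).mulVec (u j) ∈ bigCone n k N A u :=
    fun i hi j => CIC.subset_coneGen _ (Or.inr ⟨i, hi, j, rfl⟩)
  constructor
  · rintro ⟨C, hC, hinv⟩
    by_cases hex : ∃ i : Fin n, (i : ℕ) < k
    swap
    · push Not at hex
      have hKU : bigCone n k N A u = coneGen (Set.range u) := by
        unfold bigCone
        congr 1
        rw [Set.union_eq_left]
        rintro w ⟨i, hi, -⟩
        exact absurd hi (not_lt.2 (hex i))
      rw [hKU]
      exact ⟨hUproper, hUint, fun i hi => absurd hi (not_lt.2 (hex i))⟩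
    obtain ⟨i₀, hi₀⟩ := hex
    have hdet₀ := (hk i₀).2 hi₀
    obtain ⟨j₀, μ₀, φ₀, h₀⟩ := hdecj (A i₀) (hAfam i₀) (CIC.not_scalar_of_det_neg hdet₀)
    have hμ₀ := h₀.mu_neg hdet₀
    -- choose the sign of the cone
    obtain ⟨C, hC, hinv, hj₀⟩ : ∃ C : Set (Fin 2 → ℝ), IsProperCone C ∧
        (∀ i, InvariantUnder (A i) C) ∧ u j₀ ∈ C := by
      rcases h₀.mem_or hC (hinv i₀) with h | h
      · exact ⟨C, hC, hinv, h⟩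
      · exact ⟨-C, CIC.neg_proper hC, fun i => CIC.neg_inv (hinv i), h⟩
    have hinv1 : ∀ M ∈ fam1 A, InvariantUnder M C := by
      rintro M (⟨i, rfl⟩ | ⟨i, j, -, -, rfl, -⟩)
      · exact hinv i
      · intro x hx
        rw [← Matrix.mulVec_mulVec]
        exact hinv i _ (hinv j _ hx)
    -- positivity: a dominant vector in C gives a nonnegative functional
    have hphi : ∀ {M μ j φ}, CIC.Dec M μ (u j) φ → InvariantUnder M C → u j ∈ C →
        ∀ x ∈ C, 0 ≤ φ x := by
      intro M μ j φ h hM hj x hx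
      by_contra hc
      push Not at hc
      exact hu0 j (CIC.pointed_smul hC hc hj (h.phi_smul_mem hC hM hx))
    have hphine : ∀ {M μ j φ}, CIC.Dec M μ (u j) φ → InvariantUnder M C → μ < 0 →
        ∀ x ∈ C, x ≠ 0 → φ x ≠ 0 := by
      intro M μ j φ h hM hμ x hx hx0 h0
      have := hM x hx
      rw [h.dec, h0, zero_smul, add_zero] at this
      exact hx0 (CIC.pointed_smul hC hμ hx this)
    have hUφ : ∀ x ∈ coneGen (Set.range u), 0 ≤ φ₀ x := fun x hx =>
      h₀.nonneg_on hUproper (huU j₀) (hUint _ (hAfam i₀)) hx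
    have huC : ∀ j, u j ∈ C := by
      intro j
      obtain ⟨M, hM, hns, hdom⟩ := hrep j
      obtain ⟨μ, φ, h⟩ := (CIC.exists_dec (hVd M hM).1 (hVd M hM).2 hns).2 _ hdom
      rcases h.mem_or hC (hinv1 M hM) with hj | hj
      · exact hj
      · exfalso
        have h1 := hphi h₀ (hinv i₀) hj₀ _ hj
        have h2 := hUφ _ (huU j)
        rw [map_neg] at h1
        refine hphine h₀ (hinv i₀) hμ₀ _ hj (neg_ne_zero.2 (hu0 j)) ?_
        rw [map_neg]; linarith
    have hgenC : Set.range u ∪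
        {w | ∃ i : Fin n, (i : ℕ) < k ∧ ∃ j : Fin N, w = (A i).mulVec (u j)} ⊆ C := by
      rintro w (⟨j, rfl⟩ | ⟨i, hi, j, rfl⟩)
      · exact huC j
      · exact hinv i _ (huC j)
    have hKC : bigCone n k N A u ⊆ C := CIC.coneGen_subset hC.1 hC.2.1 hgenC
    have hKint : (interior (bigCone n k N A u)).Nonempty :=
      hUproper.2.2.2.2.mono (interior_mono hUsub)
    have hclosed : IsClosed (bigCone n k N A u) := by
      refine CIC.isClosed_coneGen ?_ φ₀ ?_ hKint ⟨u j₀, Or.inl ⟨j₀, rfl⟩⟩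
      · refine (Set.finite_range u).union ?_
        refine (Set.finite_range (fun p : Fin n × Fin N => (A p.1).mulVec (u p.2))).subset ?_
        rintro w ⟨i, -, j, rfl⟩
        exact ⟨(i, j), rfl⟩
      · intro g hg
        have hg0 : g ≠ 0 := by
          rcases hg with ⟨j, rfl⟩ | ⟨i, hi, j, rfl⟩
          · exact hu0 j
          · intro h
            exact hu0 j (Matrix.eq_zero_of_mulVec_eq_zero ((hk i).2 hi).ne h)
        exact lt_of_le_of_ne (hphi h₀ (hinv i₀) hj₀ g (hgenC hg))
          (hphine h₀ (hinv i₀) hμ₀ g (hgenC hg) hg0).symm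
    have hKproper : IsProperCone (bigCone n k N A u) := by
      refine ⟨CIC.coneGen_smul, CIC.coneGen_add, hclosed, ?_, hKint⟩
      apply Set.Subset.antisymm
      · rintro x ⟨h1, h2⟩
        exact CIC.pointed hC (hKC h1) (hKC h2)
      · rintro x rfl
        have : (0 : Fin 2 → ℝ) ∈ bigCone n k N A u := by
          have h0 := CIC.coneGen_smul 0 le_rfl _ (huK j₀)
          rwa [zero_smul] at h0
        exact ⟨this, by simpa using this⟩
    refine ⟨hKproper, ?_, ?_⟩
    · intro M hM v hv hvint
      obtain ⟨j, μ, φ, h⟩ := hdecj M hM (CIC.not_scalar_of_nonDom hv)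
      exact h.interior_ne hC (hinv1 M hM) (interior_mono hKC hvint) (h.nonDom hv)
    · rintro i hi v hv0 ⟨m, hm⟩ hvf
      have hdet := (hk i).2 hi
      obtain ⟨j, μ, φ, h⟩ := hdecj (A i) (hAfam i) (CIC.not_scalar_of_det_neg hdet)
      have hμ := h.mu_neg hdet
      have hvC : v ∈ C := hKC (hclosed.frontier_subset hvf)
      have hφv := hphine h (hinv i) hμ v hvC hv0
      obtain ⟨p, hp⟩ := hUproper.2.2.2.2
      have hpC : p ∈ C := hKC (hUsub (interior_subset hp))
      have hp0 : p ≠ 0 := by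
        rintro rfl
        exact CIC.zero_notMem_interior hUproper hp
      have hφp : 0 < φ p := lt_of_le_of_ne (hphi h (hinv i) (huC j) p hpC)
        (hphine h (hinv i) hμ p hpC hp0).symm
      have hApK : (A i).mulVec p ∈ bigCone n k N A u := by
        refine CIC.coneGen_map (A i) CIC.coneGen_smul CIC.coneGen_add ?_ p (interior_subset hp)
        rintro _ ⟨j, rfl⟩
        exact hAuK i hi j
      have hint : φ p • u j ∈ interior (bigCone n k N A u) := by
        have h1 := CIC.interior_add CIC.coneGen_add
          (CIC.interior_smul CIC.coneGen_smul (neg_pos.2 hμ) (interior_mono hUsub hp)) hApK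
        rw [h.dec p] at h1
        have e : -μ • p + (μ • p + φ p • u j) = φ p • u j := by module
        rwa [e] at h1
      have heq : (m - μ) • v = φ v • u j := by
        have := h.dec v
        rw [hm] at this
        rw [sub_smul, this]; simp
      have hmμ : m - μ ≠ 0 := by
        intro h0
        rw [h0, zero_smul] at heq
        rcases smul_eq_zero.1 heq.symm with h1 | h1
        · exact hφv h1
        · exact hu0 j h1
      have hvc : v = (φ v / (m - μ)) • u j := by
        rw [div_eq_inv_mul, ← smul_smul, ← heq, smul_smul, inv_mul_cancel₀ hmμ, one_smul]
      have hcne : φ v / (m - μ) ≠ 0 := div_ne_zero hφv hmμ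
      generalize φ v / (m - μ) = c at hvc hcne
      have hcpos : 0 < c := by
        rcases lt_or_gt_of_ne hcne with h1 | h1
        · exact absurd (CIC.pointed_smul hC h1 (huC j) (hvc ▸ hvC)) (hu0 j)
        · exact h1
      have : v ∈ interior (bigCone n k N A u) := by
        have h1 := CIC.interior_smul CIC.coneGen_smul (div_pos hcpos hφp) hint
        rw [smul_smul, div_mul_cancel₀ _ hφp.ne', ← hvc] at h1
        exact h1
      exact hvf.2 this
  · rintro ⟨hK, hKint, -⟩
    have hpos : ∀ M ∈ fam1 A, ¬ CIC.IsScalar M → 0 ≤ M.det →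
        InvariantUnder M (bigCone n k N A u) := by
      intro M hM hns hd x hx
      obtain ⟨j, μ, φ, h⟩ := hdecj M hM hns
      have hφ := h.nonneg_on hK (huK j) (hKint M hM) hx
      rw [h.dec x]
      exact hK.2.1 _ (hK.1 _ (h.mu_nonneg hd) _ hx) _ (hK.1 _ hφ _ (huK j))
    refine ⟨bigCone n k N A u, hK, fun i => ?_⟩
    by_cases hi : (i : ℕ) < k
    · have hdet := (hk i).2 hi
      refine CIC.coneGen_map (A i) CIC.coneGen_smul CIC.coneGen_add ?_
      rintro w (⟨j, rfl⟩ | ⟨l, hl, j, rfl⟩)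
      · exact hAuK i hi j
      · have hdetl := (hk l).2 hl
        rw [Matrix.mulVec_mulVec]
        by_cases hs : CIC.IsScalar (A i * A l)
        · obtain ⟨c, hc⟩ := hs
          rw [hc, Matrix.smul_mulVec, Matrix.one_mulVec]
          refine hK.1 c ?_ _ (huK j)
          by_contra hneg
          push Not at hneg
          obtain ⟨j', μ, φ, h⟩ := hdecj (A l) (hAfam l) (CIC.not_scalar_of_det_neg hdetl)
          have hρ := h.rho_pos
          have e : (A i).mulVec ((A l).mulVec (u j')) = c • u j' := by
            rw [Matrix.mulVec_mulVec, hc, Matrix.smul_mulVec, Matrix.one_mulVec]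
          rw [h.eig, Matrix.mulVec_smul] at e
          have hm := hK.1 _ hρ.le _ (hAuK i hi j')
          rw [e] at hm
          exact hu0 j' (CIC.pointed_smul hK hneg (huK j') hm)
        · refine hpos _ (Or.inr ⟨i, l, hdet, hdetl, rfl, hs⟩) hs ?_ _ (huK j)
          rw [Matrix.det_mul]
          exact (mul_pos_of_neg_of_neg hdet hdetl).le
    · have hdet : 0 ≤ (A i).det := not_lt.1 (fun h => hi ((hk i).1 h))
      by_cases hs : CIC.IsScalar (A i)
      · obtain ⟨c, hc⟩ := hs
        intro x hx
        have ht := (hVd _ (hAfam i)).1.2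
        rw [hc, Matrix.trace_fin_two] at ht
        simp at ht
        rw [hc, Matrix.smul_mulVec, Matrix.one_mulVec]
        exact hK.1 c (by linarith) _ hx
      · exact hpos _ (hAfam i) hs hdet
end

section
/- Let B₁, B₂ be real 2×2 non-diagonalizable Vandergraft matrices whose dominant eigenlines are distinct. Let u₁ be an eigenvector of B₁ and let u₂ be an eigenvector of B₂ chosen so that u₂ is positively associated with u₁ relative to B₁. Then: if u₁ is negatively associated with u₂ relative to B₂, then B₁ and B₂ have no common invariant proper cone; and if u₁ is positively associated with u₂ relative to B₂, then the only proper cones invariant under both B₁ and B₂ are Cone{u₁, u₂} and −Cone{u₁, u₂}. -/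
lemma coords_exist (u₁ u₂ : Fin 2 → ℝ) (hu₁ : u₁ ≠ 0) (hdist : ∀ c : ℝ, u₂ ≠ c • u₁) :
    ∃ α β : (Fin 2 → ℝ) →ₗ[ℝ] ℝ, α u₁ = 1 ∧ α u₂ = 0 ∧ β u₁ = 0 ∧ β u₂ = 1 ∧
      ∀ v, v = α v • u₁ + β v • u₂ := by
  have hD : u₁ 0 * u₂ 1 - u₁ 1 * u₂ 0 ≠ 0 := by
    intro hD
    by_cases h0 : u₁ 0 = 0
    · have h1 : u₁ 1 ≠ 0 := by
        intro h1
        apply hu₁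
        ext i
        fin_cases i
        · exact h0
        · exact h1
      have h2 : u₂ 0 = 0 := by
        rw [h0] at hD
        have : u₁ 1 * u₂ 0 = 0 := by linarith
        exact (mul_eq_zero.mp this).resolve_left h1
      apply hdist (u₂ 1 / u₁ 1)
      ext i
      fin_cases i
      · simp [h0, h2]
      · simp [h1]
    · apply hdist (u₂ 0 / u₁ 0)
      ext i
      fin_cases i
      · simp [h0]
      · simp
        field_simp
        linarith
  set D := u₁ 0 * u₂ 1 - u₁ 1 * u₂ 0 with hDdef
  let p0 : (Fin 2 → ℝ) →ₗ[ℝ] ℝ := LinearMap.proj 0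
  let p1 : (Fin 2 → ℝ) →ₗ[ℝ] ℝ := LinearMap.proj 1
  refine ⟨(u₂ 1 / D) • p0 - (u₂ 0 / D) • p1, (u₁ 0 / D) • p1 - (u₁ 1 / D) • p0, ?_, ?_, ?_, ?_, ?_⟩
  · simp [p0, p1]; field_simp; linarith
  · simp [p0, p1]; field_simp; ring
  · simp [p0, p1]; field_simp; ring
  · simp [p0, p1]; field_simp; linarith
  · intro v
    ext i
    fin_cases i
    · simp [p0, p1]; field_simp; rw [hDdef]; ring
    · simp [p0, p1]; field_simp; rw [hDdef]; ring

lemma mem_of_add_nsmul {K : Set (Fin 2 → ℝ)} (hs : ∀ a : ℝ, 0 ≤ a → ∀ x ∈ K, a • x ∈ K)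
    (hc : IsClosed K) (v w : Fin 2 → ℝ) (h : ∀ n : ℕ, v + (n : ℝ) • w ∈ K) : w ∈ K := by
  have ht : Filter.Tendsto (fun n : ℕ => ((1 : ℝ) / ((n : ℝ) + 1)) • v + w) Filter.atTop
      (nhds ((0 : ℝ) • v + w)) :=
    (tendsto_one_div_add_atTop_nhds_zero_nat.smul_const v).add_const w
  rw [zero_smul, zero_add] at ht
  refine hc.mem_of_tendsto ht (Filter.Eventually.of_forall fun n => ?_)
  have h1 := hs (1 / ((n : ℝ) + 1)) (by positivity) _ (h (n + 1))
  have hn : (n : ℝ) + 1 ≠ 0 := by positivity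
  rw [smul_add, smul_smul] at h1
  push_cast at h1
  rwa [one_div_mul_cancel hn, one_smul] at h1

lemma mem_of_inv {K : Set (Fin 2 → ℝ)} (hs : ∀ a : ℝ, 0 ≤ a → ∀ x ∈ K, a • x ∈ K)
    (hc : IsClosed K) (B : Matrix (Fin 2) (Fin 2) ℝ) (hB : InvariantUnder B K) (l : ℝ)
    (hl : 0 ≤ l) (v w : Fin 2 → ℝ) (hw : B.mulVec w = l • w) (hv : B.mulVec v = l • v + w)
    (hvK : v ∈ K) : w ∈ K := by
  rcases hl.eq_or_lt with h | h
  · have := hB v hvK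
    rwa [hv, ← h, zero_smul, zero_add] at this
  · have key : ∀ n : ℕ, v + (n : ℝ) • (l⁻¹ • w) ∈ K := by
      intro n
      induction n with
      | zero => simpa using hvK
      | succ n ih =>
        have h1 := hs l⁻¹ (by positivity) _ (hB _ ih)
        have e : l⁻¹ • B.mulVec (v + (n : ℝ) • (l⁻¹ • w)) =
            v + ((n + 1 : ℕ) : ℝ) • (l⁻¹ • w) := by
          rw [Matrix.mulVec_add, Matrix.mulVec_smul, Matrix.mulVec_smul, hv, hw]
          ext i
          simp
          field_simp
          ring
        rwa [e] at h1
    have h2 := hs l hl _ (mem_of_add_nsmul hs hc v _ key)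
    rwa [smul_smul, mul_inv_cancel₀ h.ne', one_smul] at h2

lemma isProperCone_neg {K : Set (Fin 2 → ℝ)} (h : IsProperCone K) : IsProperCone (-K) := by
  obtain ⟨h1, h2, h3, h4, p, hp⟩ := h
  refine ⟨?_, ?_, h3.neg, ?_, -p, ?_⟩
  · intro a ha x hx
    rw [Set.mem_neg] at *
    rw [← smul_neg]
    exact h1 a ha _ hx
  · intro x hx y hy
    rw [Set.mem_neg] at *
    rw [neg_add]
    exact h2 _ hx _ hy
  · rw [neg_neg, Set.inter_comm]; exact h4
  · rw [mem_interior] at hp ⊢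
    obtain ⟨t, ht, hto, hpt⟩ := hp
    exact ⟨-t, Set.neg_subset_neg.mpr ht, hto.neg, by simpa using hpt⟩

lemma invariantUnder_neg {K : Set (Fin 2 → ℝ)} {B : Matrix (Fin 2) (Fin 2) ℝ}
    (h : InvariantUnder B K) : InvariantUnder B (-K) := by
  intro x hx
  rw [Set.mem_neg] at *
  rw [← Matrix.mulVec_neg]
  exact h _ hx

lemma pointed_smul {K : Set (Fin 2 → ℝ)} (hK : IsProperCone K) (u : Fin 2 → ℝ) (hu : u ≠ 0)
    (a b : ℝ) (ha : a < 0) (hb : 0 < b) (h1 : a • u ∈ K) (h2 : b • u ∈ K) : False := by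
  obtain ⟨hs, -, -, hp, -⟩ := hK
  have e1 := hs (-a)⁻¹ (by have : 0 < -a := by linarith
                           positivity) _ h1
  have e2 := hs b⁻¹ (by positivity) _ h2
  rw [smul_smul, inv_mul_cancel₀ hb.ne', one_smul] at e2
  have : (-a)⁻¹ * a = -1 := by field_simp [ha.ne]
  rw [smul_smul, this, neg_one_smul] at e1
  have h : u ∈ K ∩ -K := ⟨e2, e1⟩
  rw [hp] at h
  exact hu h

lemma exists_coord_ne {K : Set (Fin 2 → ℝ)} (hK : IsProperCone K) (β : (Fin 2 → ℝ) →ₗ[ℝ] ℝ)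
    (u : Fin 2 → ℝ) (hu : β u = 1) : ∃ v ∈ K, β v ≠ 0 := by
  obtain ⟨-, -, -, -, p, hp⟩ := hK
  by_contra! hcon
  have ht : Filter.Tendsto (fun n : ℕ => p + ((1 : ℝ) / ((n : ℝ) + 1)) • u) Filter.atTop
      (nhds (p + (0 : ℝ) • u)) :=
    (tendsto_one_div_add_atTop_nhds_zero_nat.smul_const u).const_add p
  rw [zero_smul, add_zero] at ht
  obtain ⟨n, hn⟩ := (ht.eventually (mem_interior_iff_mem_nhds.mp hp)).exists
  have h1 := hcon _ hn
  have h2 := hcon p (interior_subset hp)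
  rw [map_add, map_smul, h2, hu, zero_add, smul_eq_mul, mul_one] at h1
  have : (0 : ℝ) < 1 / ((n : ℝ) + 1) := by positivity
  linarith

/-- Theorem: let `B₁, B₂` be non-diagonalizable `2×2` Vandergraft matrices
(eigenvalues `l₁, l₂ ≥ 0`) with distinct dominant eigenlines, `u₁` an
eigenvector of `B₁`, and `u₂` an eigenvector of `B₂` positively associated
with `u₁` relative to `B₁`. If `u₁` is negatively associated with `u₂`
relative to `B₂`, there is no common invariant proper cone; if it is
positively associated, the only common invariant proper cones are
`Cone{u₁,u₂}` and `−Cone{u₁,u₂}`. -/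
theorem two_nondiagonalizable_common_cones
    (B₁ B₂ : Matrix (Fin 2) (Fin 2) ℝ) (l₁ l₂ : ℝ)
    (hl₁ : 0 ≤ l₁) (hl₂ : 0 ≤ l₂)
    (hnd₁ : ¬ IsDiagonalizable B₁) (hnd₂ : ¬ IsDiagonalizable B₂)
    (u₁ u₂ : Fin 2 → ℝ)
    (hu₁ : u₁ ≠ 0) (heig₁ : B₁.mulVec u₁ = l₁ • u₁)
    (hu₂ : u₂ ≠ 0) (heig₂ : B₂.mulVec u₂ = l₂ • u₂)
    (hdist : ∀ c : ℝ, u₂ ≠ c • u₁)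
    (hpos : ∃ x : ℝ, 0 < x ∧ B₁.mulVec u₂ = l₁ • u₂ + x • u₁) :
    ((∃ y : ℝ, y < 0 ∧ B₂.mulVec u₁ = l₂ • u₁ + y • u₂) →
      ¬ ∃ K : Set (Fin 2 → ℝ),
        IsProperCone K ∧ InvariantUnder B₁ K ∧ InvariantUnder B₂ K) ∧
    ((∃ y : ℝ, 0 < y ∧ B₂.mulVec u₁ = l₂ • u₁ + y • u₂) →
      (IsProperCone (coneGen {u₁, u₂}) ∧
        InvariantUnder B₁ (coneGen {u₁, u₂}) ∧ InvariantUnder B₂ (coneGen {u₁, u₂}) ∧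
        IsProperCone (-(coneGen {u₁, u₂})) ∧
        InvariantUnder B₁ (-(coneGen {u₁, u₂})) ∧ InvariantUnder B₂ (-(coneGen {u₁, u₂})) ∧
        ∀ K : Set (Fin 2 → ℝ),
          IsProperCone K → InvariantUnder B₁ K → InvariantUnder B₂ K →
            K = coneGen {u₁, u₂} ∨ K = -(coneGen {u₁, u₂}))) := by
  obtain ⟨α, β, ha1, ha2, hb1, hb2, hrep⟩ := coords_exist u₁ u₂ hu₁ hdist
  obtain ⟨x, hx, hBx⟩ := hpos
  have act1 : ∀ v, B₁.mulVec v = l₁ • v + (x * β v) • u₁ := by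
    intro v
    conv_lhs => rw [hrep v]
    conv_rhs => rw [hrep v]
    rw [Matrix.mulVec_add, Matrix.mulVec_smul, Matrix.mulVec_smul, heig₁, hBx]
    simp only [map_add, map_smul, hb1, hb2, smul_eq_mul]
    module
  have act2 : ∀ y : ℝ, B₂.mulVec u₁ = l₂ • u₁ + y • u₂ →
      ∀ v, B₂.mulVec v = l₂ • v + (y * α v) • u₂ := by
    intro y hy v
    conv_lhs => rw [hrep v]
    conv_rhs => rw [hrep v]
    rw [Matrix.mulVec_add, Matrix.mulVec_smul, Matrix.mulVec_smul, heig₂, hy]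
    simp only [map_add, map_smul, ha1, ha2, smul_eq_mul]
    module
  have step1 : ∀ K, IsProperCone K → InvariantUnder B₁ K → ∀ v ∈ K, β v • u₁ ∈ K := by
    intro K hK hB v hv
    have h := mem_of_inv hK.1 hK.2.2.1 B₁ hB l₁ hl₁ v ((x * β v) • u₁)
      (by rw [Matrix.mulVec_smul, heig₁, smul_comm]) (act1 v) hv
    have h2 := hK.1 x⁻¹ (by positivity) _ h
    rwa [smul_smul, inv_mul_cancel_left₀ hx.ne'] at h2
  have step2 : ∀ y : ℝ, B₂.mulVec u₁ = l₂ • u₁ + y • u₂ →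
      ∀ K, IsProperCone K → InvariantUnder B₂ K → ∀ v ∈ K, (y * α v) • u₂ ∈ K := by
    intro y hy K hK hB v hv
    exact mem_of_inv hK.1 hK.2.2.1 B₂ hB l₂ hl₂ v ((y * α v) • u₂)
      (by rw [Matrix.mulVec_smul, heig₂, smul_comm]) (act2 y hy v) hv
  constructor
  · rintro ⟨y, hy, hBy⟩ ⟨K, hK, hi1, hi2⟩
    obtain ⟨v, hv, hne⟩ := exists_coord_ne hK β u₂ hb2
    have e1 := step1 K hK hi1 v hv
    have e2 := step2 y hBy K hK hi2 _ e1
    have e3 := step1 K hK hi1 _ e2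
    simp only [map_smul, ha1, hb2, smul_eq_mul, mul_one] at e3
    rcases lt_or_gt_of_ne hne with h | h
    · exact pointed_smul hK u₁ hu₁ _ _ h (mul_pos_of_neg_of_neg hy h) e1 e3
    · exact pointed_smul hK u₁ hu₁ _ _ (mul_neg_of_neg_of_pos hy h) h e3 e1
  · rintro ⟨y, hy, hBy⟩
    have step2p : ∀ K, IsProperCone K → InvariantUnder B₂ K → ∀ v ∈ K, α v • u₂ ∈ K := by
      intro K hK hB v hv
      have h2 := hK.1 y⁻¹ (by positivity) _ (step2 y hBy K hK hB v hv)
      rwa [smul_smul, inv_mul_cancel_left₀ hy.ne'] at h2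
    have hC : coneGen {u₁, u₂} = {v | 0 ≤ α v ∧ 0 ≤ β v} := by
      apply Set.Subset.antisymm
      · apply Set.sInter_subset_of_mem
        refine ⟨?_, ?_, ?_⟩
        · rintro a ha v ⟨h1, h2⟩
          simp only [Set.mem_setOf_eq, map_smul, smul_eq_mul]
          exact ⟨mul_nonneg ha h1, mul_nonneg ha h2⟩
        · rintro v ⟨h1, h2⟩ w ⟨h3, h4⟩
          simp only [Set.mem_setOf_eq, map_add]
          exact ⟨add_nonneg h1 h3, add_nonneg h2 h4⟩
        · rintro v (rfl | rfl)
          · simp [ha1, hb1]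
          · simp [ha2, hb2]
      · rintro v ⟨h1, h2⟩ K ⟨hs, hadd, hsub⟩
        rw [hrep v]
        exact hadd _ (hs _ h1 _ (hsub (by simp))) _ (hs _ h2 _ (hsub (by simp)))
    have ca : Continuous α := α.continuous_of_finiteDimensional
    have cb : Continuous β := β.continuous_of_finiteDimensional
    have hCp : IsProperCone (coneGen {u₁, u₂}) := by
      rw [hC]
      refine ⟨?_, ?_, ?_, ?_, u₁ + u₂, ?_⟩
      · rintro a ha v ⟨h1, h2⟩
        simp only [Set.mem_setOf_eq, map_smul, smul_eq_mul]
        exact ⟨mul_nonneg ha h1, mul_nonneg ha h2⟩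
      · rintro v ⟨h1, h2⟩ w ⟨h3, h4⟩
        simp only [Set.mem_setOf_eq, map_add]
        exact ⟨add_nonneg h1 h3, add_nonneg h2 h4⟩
      · exact (isClosed_le continuous_const ca).inter (isClosed_le continuous_const cb)
      · ext v
        simp only [Set.mem_inter_iff, Set.mem_neg, Set.mem_setOf_eq, map_neg,
          Set.mem_singleton_iff]
        constructor
        · rintro ⟨⟨h1, h2⟩, h3, h4⟩
          rw [hrep v, show α v = 0 by linarith, show β v = 0 by linarith]
          simp
        · rintro rfl
          simp
      · rw [mem_interior]
        refine ⟨{v | 0 < α v} ∩ {v | 0 < β v}, fun v hv => ⟨le_of_lt hv.1, le_of_lt hv.2⟩,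
          (isOpen_lt continuous_const ca).inter (isOpen_lt continuous_const cb), ?_⟩
        simp [ha1, ha2, hb1, hb2]
    have hC1 : InvariantUnder B₁ (coneGen {u₁, u₂}) := by
      rw [hC]
      rintro v ⟨h1, h2⟩
      rw [act1 v]
      simp only [Set.mem_setOf_eq, map_add, map_smul, smul_eq_mul, ha1, hb1]
      constructor <;> positivity
    have hC2 : InvariantUnder B₂ (coneGen {u₁, u₂}) := by
      rw [hC]
      rintro v ⟨h1, h2⟩
      rw [act2 y hBy v]
      simp only [Set.mem_setOf_eq, map_add, map_smul, smul_eq_mul, ha2, hb2]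
      constructor <;> positivity
    have main : ∀ K, IsProperCone K → InvariantUnder B₁ K → InvariantUnder B₂ K →
        (∃ v ∈ K, 0 < β v) → K = coneGen {u₁, u₂} := by
      rintro K hK hi1 hi2 ⟨v, hv, hpos⟩
      have e1 := step1 K hK hi1 v hv
      have e2 := step2p K hK hi2 _ e1
      simp only [map_smul, ha1, smul_eq_mul, mul_one] at e2
      rw [hC]
      apply Set.Subset.antisymm
      · intro w hw
        constructor
        · by_contra! hneg
          exact pointed_smul hK u₂ hu₂ _ _ hneg hpos (step2p K hK hi2 w hw) e2
        · by_contra! hneg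
          exact pointed_smul hK u₁ hu₁ _ _ hneg hpos (step1 K hK hi1 w hw) e1
      · rintro w ⟨h1, h2⟩
        have f1 := hK.1 (α w / β v) (by positivity) _ e1
        have f2 := hK.1 (β w / β v) (by positivity) _ e2
        rw [smul_smul, div_mul_cancel₀ _ hpos.ne'] at f1 f2
        rw [hrep w]
        exact hK.2.1 _ f1 _ f2
    refine ⟨hCp, hC1, hC2, isProperCone_neg hCp, invariantUnder_neg hC1, invariantUnder_neg hC2, ?_⟩
    intro K hK hi1 hi2
    obtain ⟨v, hv, hne⟩ := exists_coord_ne hK β u₂ hb2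
    rcases lt_or_gt_of_ne hne with h | h
    · right
      have := main (-K) (isProperCone_neg hK) (invariantUnder_neg hi1) (invariantUnder_neg hi2)
        ⟨-v, by simpa using hv, by simpa using h⟩
      rw [← this, neg_neg]
    · left
      exact main K hK hi1 hi2 ⟨v, hv, h⟩
end

section
/- Let A₁,…,A_q be pairwise commuting real m×m matrices, let λ₀ ∈ ℝ, and suppose there is a nonzero x ∈ ℝ^m with A_j x = λ₀ x for j = 1,…,q, and that λ₀ is a simple root of the minimal polynomial of A_j for each j. Then there exists an invertible real m×m matrix S such that for every j, S⁻¹A_jS is block diagonal of the form diag(λ₀, B_j), where B_j is an (m−1)×(m−1) real matrix (i.e., the first row and first column of S⁻¹A_jS vanish except for the (1,1) entry, which equals λ₀). -/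
open Matrix Polynomial in
theorem deflation_left_eig (n q : ℕ) (A : Fin q → Matrix (Fin n) (Fin n) ℝ)
    (hcomm : ∀ i j, A i * A j = A j * A i)
    (lam0 : ℝ) (x : Fin n → ℝ) (hx : x ≠ 0)
    (heig : ∀ j, (A j).mulVec x = lam0 • x)
    (hsemi : ∀ j, Polynomial.rootMultiplicity lam0 (minpoly ℝ (A j)) = 1) (s : Finset (Fin q)) :
    ∃ y : Fin n → ℝ, y ⬝ᵥ x = 1 ∧ ∀ j ∈ s, y ᵥ* A j = lam0 • y := by
  induction s using Finset.induction_on with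
  | empty =>
    obtain ⟨i, hi⟩ := Function.ne_iff.mp hx
    refine ⟨Pi.single i (x i)⁻¹, ?_, by simp⟩
    simpa [single_dotProduct] using inv_mul_cancel₀ hi
  | insert k s _ ih =>
    obtain ⟨y, hy, hys⟩ := ih
    have hne : minpoly ℝ (A k) ≠ 0 := by
      intro h
      have := hsemi k
      simp [h] at this
    obtain ⟨p, hp, hnd⟩ := Polynomial.exists_eq_pow_rootMultiplicity_mul_and_not_dvd _ hne lam0
    rw [hsemi k, pow_one] at hp
    have hpl : p.eval lam0 ≠ 0 := fun h => hnd (Polynomial.dvd_iff_isRoot.mpr h)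
    obtain ⟨r, hr⟩ := Polynomial.X_sub_C_dvd_sub_C_eval (a := lam0) (p := p)
    have h0 : aeval (A k) (p * (X - C lam0)) = 0 := by
      rw [mul_comm, ← hp, minpoly.aeval]
    have hPA : aeval (A k) p * A k = lam0 • aeval (A k) p := by
      rw [map_mul, map_sub, aeval_X, aeval_C, mul_sub, sub_eq_zero] at h0
      rw [h0, ← Algebra.commutes, ← Algebra.smul_def]
    have hPx : aeval (A k) p *ᵥ x = p.eval lam0 • x := by
      have hp2 : p = r * (X - C lam0) + C (p.eval lam0) := by
        rw [mul_comm, ← hr]; ring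
      have : aeval (A k) p = aeval (A k) r * (A k - lam0 • 1) + p.eval lam0 • 1 := by
        conv_lhs => rw [hp2]
        simp [Algebra.algebraMap_eq_smul_one]
      rw [this, add_mulVec, ← mulVec_mulVec, sub_mulVec, heig, smul_mulVec, smul_mulVec]
      simp
    refine ⟨(p.eval lam0)⁻¹ • (y ᵥ* aeval (A k) p), ?_, ?_⟩
    · rw [smul_dotProduct, ← dotProduct_mulVec, hPx, dotProduct_smul, hy]
      simp [hpl]
    · intro j hj
      rw [smul_vecMul, vecMul_vecMul, smul_comm lam0]
      congr 1
      rcases Finset.mem_insert.mp hj with rfl | hj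
      · rw [hPA, vecMul_smul]
      · have hc : Commute (A j) (aeval (A k) p) := by
          clear hp hnd hpl hr h0 hPA hPx
          induction p using Polynomial.induction_on' with
          | add a b ha hb => rw [map_add]; exact ha.add_right hb
          | monomial t a =>
            rw [aeval_monomial]
            exact Commute.mul_right (Algebra.commutes a (A j)).symm (Commute.pow_right (hcomm j k) t)
        rw [← hc.eq, ← vecMul_vecMul, hys j hj, smul_vecMul]

open Matrix in
theorem deflation_basis (m : ℕ) (x y : Fin (m + 1) → ℝ) (h : y ⬝ᵥ x = 1) :
    ∃ S : Matrix (Fin (m + 1)) (Fin (m + 1)) ℝ, IsUnit S.det ∧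
      S *ᵥ Pi.single 0 1 = x ∧ y ᵥ* S = Pi.single 0 1 := by
  have hx : x ≠ 0 := by rintro rfl; simp at h
  obtain ⟨e, he⟩ := SeparatingDual.exists_continuousLinearEquiv_apply_eq (R := ℝ)
    (x := (Pi.single 0 1 : Fin (m + 1) → ℝ)) (y := x) (by simp) hx
  set S0 := LinearMap.toMatrix' (e.toLinearEquiv : (Fin (m + 1) → ℝ) →ₗ[ℝ] (Fin (m + 1) → ℝ)) with hS0
  have hu : IsUnit S0.det := by
    rw [hS0, LinearMap.det_toMatrix']
    exact LinearEquiv.isUnit_det' _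
  have hS0x : S0 *ᵥ Pi.single 0 1 = x := by
    rw [hS0, LinearMap.toMatrix'_mulVec]; exact he
  set f : Fin (m + 1) → ℝ := Pi.single 0 1 with hf
  set z := y ᵥ* S0 with hz
  have hzf : z ⬝ᵥ f = 1 := by rw [hz, ← dotProduct_mulVec, hS0x, h]
  have hff : f ⬝ᵥ f = 1 := by simp [hf]
  have hd : (z - f) ⬝ᵥ f = 0 := by rw [sub_dotProduct, hzf, hff, sub_self]
  have hUT : (1 - vecMulVec f (z - f)) * (1 + vecMulVec f (z - f)) = 1 := by
    have : vecMulVec f (z - f) * vecMulVec f (z - f) = 0 := by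
      rw [vecMulVec_mul_vecMulVec, hd]; simp
    rw [sub_mul, mul_add, mul_add, this]; simp
  refine ⟨S0 * (1 - vecMulVec f (z - f)), ?_, ?_, ?_⟩
  · rw [det_mul]
    exact hu.mul (isUnit_det_of_right_inverse hUT)
  · rw [← mulVec_mulVec, sub_mulVec, vecMulVec_mulVec, hd]
    simp [hS0x]
  · rw [← vecMul_vecMul, ← hz, vecMul_sub, vecMul_vecMulVec, hzf]
    simp

/-- Theorem: if `A 1, …, A q` are commuting real `(m+1)×(m+1)` matrices,
`x ≠ 0` satisfies `A j x = λ₀ x` for all `j`, and `λ₀` is a simple root of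
the minimal polynomial of each `A j`, then there is a real invertible `S`
such that each `S⁻¹ A j S` is block diagonal `diag(λ₀, B j)`: its first row
and first column vanish except for the `(0,0)` entry, which equals `λ₀`. -/
theorem simultaneous_deflation_of_commuting
    (m q : ℕ) (A : Fin q → Matrix (Fin (m + 1)) (Fin (m + 1)) ℝ)
    (hcomm : ∀ i j, A i * A j = A j * A i)
    (lam0 : ℝ) (x : Fin (m + 1) → ℝ) (hx : x ≠ 0)
    (heig : ∀ j, (A j).mulVec x = lam0 • x)
    (hsemi : ∀ j, Polynomial.rootMultiplicity lam0 (minpoly ℝ (A j)) = 1) :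
    ∃ S : Matrix (Fin (m + 1)) (Fin (m + 1)) ℝ, IsUnit S.det ∧
      ∀ j, (S⁻¹ * A j * S) 0 0 = lam0 ∧
        ∀ i : Fin (m + 1), i ≠ 0 →
          (S⁻¹ * A j * S) 0 i = 0 ∧ (S⁻¹ * A j * S) i 0 = 0 := by
  obtain ⟨y, hy, hyA⟩ := deflation_left_eig (m + 1) q A hcomm lam0 x hx heig hsemi Finset.univ
  obtain ⟨S, hS, hSx, hyS⟩ := deflation_basis m x y hy
  refine ⟨S, hS, fun j => ?_⟩
  have hcol : Matrix.mulVec (S⁻¹ * A j * S) (Pi.single 0 1) = lam0 • Pi.single 0 1 := by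
    rw [← Matrix.mulVec_mulVec, hSx, ← Matrix.mulVec_mulVec, heig, Matrix.mulVec_smul, ← hSx,
      Matrix.mulVec_mulVec, Matrix.nonsing_inv_mul _ hS, Matrix.one_mulVec]
  have hrow : Matrix.vecMul (Pi.single 0 1) (S⁻¹ * A j * S) = lam0 • Pi.single 0 1 := by
    rw [← hyS, Matrix.vecMul_vecMul, ← mul_assoc, ← mul_assoc, Matrix.mul_nonsing_inv _ hS,
      one_mul, ← Matrix.vecMul_vecMul, hyA j (Finset.mem_univ j), Matrix.smul_vecMul]
  rw [Matrix.mulVec_single_one] at hcol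
  rw [Matrix.single_one_vecMul] at hrow
  refine ⟨?_, fun i hi => ⟨?_, ?_⟩⟩
  · simpa using congrFun hrow 0
  · simpa [hi] using congrFun hrow i
  · simpa [hi] using congrFun hcol i
end
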